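/- In the tower construction, for every n ≥ 2 and every prime ideal q′ of D_{n−1} with q′ ≠ 𝓜_{n−1}, there exists a unique prime ideal q of Dₙ with q ≠ 𝓜ₙ and q ∩ D_{n−1} = q′, and moreover (Dₙ)_q = (D_{n−1})_{q′}(X′ₙ), the Nagata ring of (D_{n−1})_{q′} in the variable X′ₙ. -/

import Mathlib

/- Preamble: the tower construction of Fontana–Kabbaj (Example 3.1).
All rings are realized as subsets/subrings of one ambient field `Amb k0 r`:
the rational function field over `k0` in the indeterminates
`X₁, X₂, …` (indexed by `ℕ`), `Y`, and `Z₁, …, Z_{r-1}`. -/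

noncomputable section

open Polynomial

/-- Index type for the indeterminates: `Sum.inl n` is `Xₙ`, `Sum.inr (Sum.inl ())` is `Y`,
and `Sum.inr (Sum.inr i)` is `Z_{i+1}`. -/
abbrev TowerVars (r : ℕ) : Type := ℕ ⊕ (Unit ⊕ Fin (r - 1))

/-- The ambient field: the fraction field of the polynomial ring over `k0` in all the
indeterminates. -/
abbrev Amb (k0 : Type) [Field k0] (r : ℕ) : Type :=
  FractionRing (MvPolynomial (TowerVars r) k0)

variable (k0 : Type) [Field k0] (r : ℕ)

/-- The indeterminate `Xₙ` as an element of the ambient field. -/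
def ambX (n : ℕ) : Amb k0 r :=
  algebraMap (MvPolynomial (TowerVars r) k0) (Amb k0 r) (MvPolynomial.X (Sum.inl n))

/-- The indeterminate `Y` as an element of the ambient field. -/
def ambY : Amb k0 r :=
  algebraMap (MvPolynomial (TowerVars r) k0) (Amb k0 r) (MvPolynomial.X (Sum.inr (Sum.inl ())))

/-- The indeterminates `Z₁, …, Z_{r-1}` as elements of the ambient field. -/
def ambZ (i : Fin (r - 1)) : Amb k0 r :=
  algebraMap (MvPolynomial (TowerVars r) k0) (Amb k0 r) (MvPolynomial.X (Sum.inr (Sum.inr i)))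

/-- The image of the base field `k0` in the ambient field. -/
def baseSet : Set (Amb k0 r) :=
  Set.range fun c : k0 => algebraMap (MvPolynomial (TowerVars r) k0) (Amb k0 r) (MvPolynomial.C c)

/-- `kₙ := k0(X₁, …, Xₙ)` as a subfield of the ambient field. -/
def kfld (n : ℕ) : Subfield (Amb k0 r) :=
  Subfield.closure (baseSet k0 r ∪ {x | ∃ i, 1 ≤ i ∧ i ≤ n ∧ x = ambX k0 r i})

/-- `Fₙ := kₙ(Z₁, …, Z_{r-1})`. -/
def Ffld (n : ℕ) : Subfield (Amb k0 r) :=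
  Subfield.closure (↑(kfld k0 r n) ∪ Set.range (ambZ k0 r))

/-- `Kₙ := Fₙ(Y)`. -/
def Kfld (n : ℕ) : Subfield (Amb k0 r) :=
  Subfield.closure (↑(Ffld k0 r n) ∪ {ambY k0 r})

/-- The polynomial ring `Fₙ[Y]` as a subring of the ambient field. -/
def polyRing (n : ℕ) : Subring (Amb k0 r) :=
  Subring.closure (↑(Ffld k0 r n) ∪ {ambY k0 r})

/-- `Vₙ := Fₙ[Y]_{(Y)}`, the localization of `Fₙ[Y]` at the prime `(Y)`, as a subset of
the ambient field. -/
def Vset (n : ℕ) : Set (Amb k0 r) :=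
  {x | ∃ f ∈ polyRing k0 r n, ∃ g ∈ polyRing k0 r n,
    (¬ ∃ h ∈ polyRing k0 r n, g = ambY k0 r * h) ∧ x = f / g}

/-- `Mₙ := Y·Fₙ[Y]_{(Y)}`, the maximal ideal of `Vₙ`. -/
def Mset (n : ℕ) : Set (Amb k0 r) :=
  {x | ∃ v ∈ Vset k0 r n, x = ambY k0 r * v}

/-- `Aₙ := kₙ + Mₙ`. -/
def Aset (n : ℕ) : Set (Amb k0 r) :=
  {x | ∃ c ∈ kfld k0 r n, ∃ m ∈ Mset k0 r n, x = c + m}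

/-- `k := ⋃ₙ kₙ` as a subset of the ambient field. -/
def kfldU : Set (Amb k0 r) := ⋃ n, (kfld k0 r n : Set (Amb k0 r))

/-- `F := k(Z₁, …, Z_{r-1}) = ⋃ₙ Fₙ`. -/
def FfldU : Subfield (Amb k0 r) :=
  Subfield.closure (kfldU k0 r ∪ Set.range (ambZ k0 r))

/-- `K := F(Y) = ⋃ₙ Kₙ`. -/
def KfldU : Subfield (Amb k0 r) :=
  Subfield.closure (↑(FfldU k0 r) ∪ {ambY k0 r})

/-- The polynomial ring `F[Y]`. -/
def polyRingU : Subring (Amb k0 r) :=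
  Subring.closure (↑(FfldU k0 r) ∪ {ambY k0 r})

/-- `V := F[Y]_{(Y)}`. -/
def VsetU : Set (Amb k0 r) :=
  {x | ∃ f ∈ polyRingU k0 r, ∃ g ∈ polyRingU k0 r,
    (¬ ∃ h ∈ polyRingU k0 r, g = ambY k0 r * h) ∧ x = f / g}

/-- `M := Y·F[Y]_{(Y)} = ⋃ₙ Mₙ`. -/
def MsetU : Set (Amb k0 r) :=
  {x | ∃ v ∈ VsetU k0 r, x = ambY k0 r * v}

/-- `A := k + M = ⋃ₙ Aₙ`. -/
def AsetU : Set (Amb k0 r) :=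
  {x | ∃ c ∈ kfldU k0 r, ∃ m ∈ MsetU k0 r, x = c + m}

/-- `X′ₙ := (1 + Y·Xₙ)/Y`. -/
def ambX' (n : ℕ) : Amb k0 r :=
  (1 + ambY k0 r * ambX k0 r n) / ambY k0 r

/-- `1` belongs to the ideal of `W` generated by the coefficients of `g`, where `W` is a
subring (given as a subset `S`) of the ambient field. -/
def unitContent (S : Set (Amb k0 r)) (g : Polynomial (Amb k0 r)) : Prop :=
  ∃ (t : Finset ℕ) (u : ℕ → Amb k0 r), (∀ i ∈ t, u i ∈ S) ∧ ∑ i ∈ t, u i * g.coeff i = 1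

/-- The Nagata ring `W(T)` of a subring `W ⊆ Amb k0 r` (given as a subset `S`) in the
"variable" `T`: all fractions `f(T)/g(T)` with `f, g ∈ W[T]` and the coefficients of `g`
generating the unit ideal of `W`.  (When `T` is transcendental over `W` this is the usual
Nagata ring.) -/
def nagataSet (S : Set (Amb k0 r)) (T : Amb k0 r) : Set (Amb k0 r) :=
  {x | ∃ f g : Polynomial (Amb k0 r), (∀ i, f.coeff i ∈ S) ∧ (∀ i, g.coeff i ∈ S) ∧
    unitContent k0 r S g ∧ x = f.eval T / g.eval T}

/-- The valuation overrings of a ring `D` (given as a subset) inside a subfield `L` of the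
ambient field: subrings `W` with `D ⊆ W ⊆ L` such that for every `x ∈ L`, `x ∈ W` or
`x⁻¹ ∈ W`. -/
def valOverringsIn (D : Set (Amb k0 r)) (L : Subfield (Amb k0 r)) : Set (Subring (Amb k0 r)) :=
  {W | D ⊆ ↑W ∧ (W : Set (Amb k0 r)) ⊆ (L : Set (Amb k0 r)) ∧ ∀ x ∈ L, x ∈ W ∨ x⁻¹ ∈ W}

/-- The Kronecker function ring `Kr_{L(T)}(D, b) = ⋂ {W(T) : W a valuation overring of `D`
in `L`}`, realized as a subset of the ambient field. -/
def krSet (D : Set (Amb k0 r)) (L : Subfield (Amb k0 r)) (T : Amb k0 r) : Set (Amb k0 r) :=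
  ⋂ W ∈ valOverringsIn k0 r D L, nagataSet k0 r (↑W) T

/-- The tower `Dₙ`: `D₁ := A₁` and `Dₙ := Bₙ ∩ Aₙ` for `n ≥ 2`, where
`Bₙ := Kr_{K_{n-1}(X′ₙ)}(D_{n-1}, b)`.  (The value at `0` is junk, set to `D₁`.) -/
def Dset : ℕ → Set (Amb k0 r)
  | 0 => Aset k0 r 1
  | 1 => Aset k0 r 1
  | n + 2 => krSet k0 r (Dset (n + 1)) (Kfld k0 r (n + 1)) (ambX' k0 r (n + 2)) ∩ Aset k0 r (n + 2)

/-- `Bₙ := Kr_{K_{n-1}(X′ₙ)}(D_{n-1}, b)` (meaningful for `n ≥ 2`). -/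
def Bset (n : ℕ) : Set (Amb k0 r) :=
  krSet k0 r (Dset k0 r (n - 1)) (Kfld k0 r (n - 1)) (ambX' k0 r n)

/-- `𝓜ₙ := Mₙ ∩ Dₙ`. -/
def MMset (n : ℕ) : Set (Amb k0 r) := Mset k0 r n ∩ Dset k0 r n

/-- `D := ⋃__{n ≥ 1} Dₙ`. -/
def DsetU : Set (Amb k0 r) := ⋃ n, Dset k0 r n

/-- `𝓜 := ⋃_{n ≥ 2} 𝓜ₙ`. -/
def MMsetU : Set (Amb k0 r) := ⋃ n, MMset k0 r (n + 2)

/-- The localization `D_m = {a/b : a, b ∈ D, b ∉ m}` of a subring `D` of the ambient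
field (given as a subset) at (the complement of) a subset `m`. -/
def locAt (D m : Set (Amb k0 r)) : Set (Amb k0 r) :=
  {x | ∃ a ∈ D, ∃ b ∈ D, b ∉ m ∧ x = a / b}

/-- The quotient field, inside the ambient field, of a subring given as a subset. -/
def qfSet (D : Set (Amb k0 r)) : Set (Amb k0 r) :=
  {x | ∃ a ∈ D, ∃ b ∈ D, b ≠ 0 ∧ x = a / b}

/-- The nonunits of a subring of the ambient field, given as a subset: in a local
subring of a field these form the maximal ideal. -/
def nonunitsIn (S : Set (Amb k0 r)) : Set (Amb k0 r) :=
  {x | x ∈ S ∧ (x = 0 ∨ x⁻¹ ∉ S)}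

/-- A subring `A` of the ambient field is a pseudo-valuation domain: it is local, and its
maximal ideal (= set of nonunits) is also the maximal ideal of some valuation overring of
`A` in its quotient field. -/
def IsPVDSub (A : Subring (Amb k0 r)) : Prop :=
  IsLocalRing ↥A ∧
  ∃ W : Subring (Amb k0 r), (A : Set (Amb k0 r)) ⊆ ↑W ∧
    (W : Set (Amb k0 r)) ⊆ qfSet k0 r ↑A ∧
    (∀ x ∈ qfSet k0 r (A : Set (Amb k0 r)), x ∈ W ∨ x⁻¹ ∈ W) ∧
    nonunitsIn k0 r ↑A = nonunitsIn k0 r ↑W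

/-- The valuative dimension of a subring of the ambient field: the supremum of the Krull
dimensions of its valuation overrings (in its quotient field). -/
def subValuativeDim (A : Subring (Amb k0 r)) : WithBot ℕ∞ :=
  ⨆ W : {W : Subring (Amb k0 r) // (A : Set (Amb k0 r)) ⊆ ↑W ∧
      (W : Set (Amb k0 r)) ⊆ qfSet k0 r ↑A ∧
      ∀ x ∈ qfSet k0 r (A : Set (Amb k0 r)), x ∈ W ∨ x⁻¹ ∈ W},
    ringKrullDim ↥(W : Subring (Amb k0 r))


/-- `1` belongs to the ideal generated by the coefficients of a multivariable polynomial
`g` in the subring given by the subset `S`. -/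
def mvUnitContent (S : Set (Amb k0 r)) (g : MvPolynomial ℕ (Amb k0 r)) : Prop :=
  ∃ (t : Finset (ℕ →₀ ℕ)) (u : (ℕ →₀ ℕ) → Amb k0 r),
    (∀ m ∈ t, u m ∈ S) ∧ ∑ m ∈ t, u m * MvPolynomial.coeff m g = 1

/-- The Nagata ring `W(T₀, T₁, …)` of a subring `W` of the ambient field (given as a
subset `S`) in countably many "variables" `T j`: all fractions `f(T)/g(T)` with
`f, g ∈ W[T₀, T₁, …]` and the coefficients of `g` generating the unit ideal of `W`. -/
def nagataSetMv (S : Set (Amb k0 r)) (T : ℕ → Amb k0 r) : Set (Amb k0 r) :=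
  {x | ∃ f g : MvPolynomial ℕ (Amb k0 r),
    (∀ m, MvPolynomial.coeff m f ∈ S) ∧ (∀ m, MvPolynomial.coeff m g ∈ S) ∧
    mvUnitContent k0 r S g ∧ x = MvPolynomial.eval T f / MvPolynomial.eval T g}

/-- A subring `S` of the ambient field is an *essential* domain: `S` is the intersection
of a family of localizations `S_p` at primes `p ∈ Δ`, each of which is a valuation domain
(with quotient field the quotient field of `S`). -/
def IsEssentialSub (S : Subring (Amb k0 r)) : Prop :=
  ∃ Δ : Set (Ideal ↥S),
    (∀ p ∈ Δ, p.IsPrime) ∧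
    (∀ p ∈ Δ, ∀ x ∈ qfSet k0 r (S : Set (Amb k0 r)),
      x ∈ locAt k0 r ↑S (Subtype.val '' (p : Set ↥S)) ∨
      x⁻¹ ∈ locAt k0 r ↑S (Subtype.val '' (p : Set ↥S))) ∧
    (S : Set (Amb k0 r)) = ⋂ p ∈ Δ, locAt k0 r ↑S (Subtype.val '' (p : Set ↥S))

end


namespace TowerAux
open Polynomial
section generic
variable {E : Type*} [Field E]

theorem exists_lift {S : Subring E} {f : E[X]} (h : ∀ i, f.coeff i ∈ S) :
    ∃ f' : S[X], f'.map S.subtype = f := by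
  have : f ∈ Polynomial.lifts S.subtype := by
    rw [Polynomial.lifts_iff_coeff_lifts]
    intro i
    exact ⟨⟨_, h i⟩, rfl⟩
  exact (Polynomial.mem_lifts f).1 this

theorem coefs_map {S : Subring E} (f' : S[X]) : ∀ i, (f'.map S.subtype).coeff i ∈ S := by
  intro i
  rw [coeff_map]
  exact (f'.coeff i).2

theorem coefs_mul {S : Subring E} {f g : E[X]} (hf : ∀ i, f.coeff i ∈ S)
    (hg : ∀ i, g.coeff i ∈ S) : ∀ i, (f * g).coeff i ∈ S := by
  obtain ⟨f', rfl⟩ := exists_lift hf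
  obtain ⟨g', rfl⟩ := exists_lift hg
  rw [← Polynomial.map_mul]
  exact coefs_map _

theorem coefs_add {S : Subring E} {f g : E[X]} (hf : ∀ i, f.coeff i ∈ S)
    (hg : ∀ i, g.coeff i ∈ S) : ∀ i, (f + g).coeff i ∈ S := by
  intro i
  rw [coeff_add]
  exact S.add_mem (hf i) (hg i)

theorem coefs_neg {S : Subring E} {f : E[X]} (hf : ∀ i, f.coeff i ∈ S) :
    ∀ i, (-f).coeff i ∈ S := by
  intro i
  rw [coeff_neg]
  exact S.neg_mem (hf i)

theorem coefs_C {S : Subring E} {a : E} (ha : a ∈ S) : ∀ i, (C a : E[X]).coeff i ∈ S := by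
  intro i
  rw [coeff_C]
  split_ifs
  · exact ha
  · exact S.zero_mem

theorem coefs_one {S : Subring E} : ∀ i, (1 : E[X]).coeff i ∈ S :=
  coefs_C (a := 1) S.one_mem

theorem coefs_Xpow {S : Subring E} (n : ℕ) : ∀ i, (X ^ n : E[X]).coeff i ∈ S := by
  intro i
  rw [coeff_X_pow]
  split_ifs
  · exact S.one_mem
  · exact S.zero_mem

theorem coefs_X {S : Subring E} : ∀ i, (X : E[X]).coeff i ∈ S := by
  simpa using coefs_Xpow (S := S) 1

/-- all coefficients lie in the ideal -/
def InP {S : Subring E} (P : Ideal S) (f : E[X]) : Prop :=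
  ∀ i, f.coeff i ∈ (Subtype.val '' (P : Set S) : Set E)

theorem mem_val {S : Subring E} {P : Ideal S} {x : E} (hx : x ∈ S) :
    x ∈ (Subtype.val '' (P : Set S) : Set E) ↔ (⟨x, hx⟩ : S) ∈ P := by
  constructor
  · rintro ⟨y, hy, rfl⟩
    exact hy
  · intro h
    exact ⟨_, h, rfl⟩

theorem val_mem {S : Subring E} {P : Ideal S} {x : E}
    (hx : x ∈ (Subtype.val '' (P : Set S) : Set E)) : x ∈ S := by
  obtain ⟨y, hy, rfl⟩ := hx
  exact y.2

theorem inP_map {S : Subring E} {P : Ideal S} (f' : S[X]) :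
    InP P (f'.map S.subtype) ↔ f' ∈ Ideal.map (C : S →+* S[X]) P := by
  rw [Ideal.mem_map_C_iff]
  refine forall_congr' fun i => ?_
  rw [coeff_map]
  exact mem_val (f'.coeff i).2

theorem inP_mul_iff {S : Subring E} {P : Ideal S} (hP : P.IsPrime) {f g : E[X]}
    (hf : ∀ i, f.coeff i ∈ S) (hg : ∀ i, g.coeff i ∈ S) :
    InP P (f * g) ↔ InP P f ∨ InP P g := by
  obtain ⟨f', rfl⟩ := exists_lift hf
  obtain ⟨g', rfl⟩ := exists_lift hg
  rw [← Polynomial.map_mul, inP_map, inP_map, inP_map]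
  have := Ideal.isPrime_map_C_of_isPrime (P := P)
  exact this.mul_mem_iff_mem_or_mem

theorem inP_add {S : Subring E} {P : Ideal S} {f g : E[X]}
    (hf : InP P f) (hg : InP P g) : InP P (f + g) := by
  intro i
  obtain ⟨a, ha, ha'⟩ := hf i
  obtain ⟨b, hb, hb'⟩ := hg i
  rw [coeff_add, ← ha', ← hb']
  exact ⟨a + b, P.add_mem ha hb, rfl⟩

theorem inP_C {S : Subring E} {P : Ideal S} {a : E} :
    InP P (C a) ↔ a ∈ (Subtype.val '' (P : Set S) : Set E) := by
  constructor
  · intro h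
    simpa using h 0
  · intro h i
    rw [coeff_C]
    split_ifs
    · exact h
    · exact ⟨0, P.zero_mem, rfl⟩

theorem not_inP_Xpow {S : Subring E} {P : Ideal S} (hP : P.IsPrime) (n : ℕ) :
    ¬ InP P (X ^ n : E[X]) := by
  intro h
  have := h n
  rw [coeff_X_pow, if_pos rfl] at this
  exact hP.ne_top ((Ideal.eq_top_iff_one _).2 ((mem_val S.one_mem).1 this))

theorem not_inP_one {S : Subring E} {P : Ideal S} (hP : P.IsPrime) :
    ¬ InP P (1 : E[X]) := by
  simpa using not_inP_Xpow (E := E) hP 0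

theorem ne_zero_of_not_inP {S : Subring E} {P : Ideal S} {f : E[X]} (h : ¬ InP P f) : f ≠ 0 := by
  rintro rfl
  apply h
  intro i
  exact ⟨0, P.zero_mem, by simp⟩

def gUnit (S : Set E) (g : E[X]) : Prop :=
  ∃ (t : Finset ℕ) (u : ℕ → E), (∀ i ∈ t, u i ∈ S) ∧ ∑ i ∈ t, u i * g.coeff i = 1

def gNag (S : Set E) (T : E) : Set E :=
  {x | ∃ f g : E[X], (∀ i, f.coeff i ∈ S) ∧ (∀ i, g.coeff i ∈ S) ∧
    gUnit S g ∧ x = f.eval T / g.eval T}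

def gVal (D : Set E) (L : Subfield E) : Set (Subring E) :=
  {W | D ⊆ ↑W ∧ (W : Set E) ⊆ (L : Set E) ∧ ∀ x ∈ L, x ∈ W ∨ x⁻¹ ∈ W}

def gKr (D : Set E) (L : Subfield E) (T : E) : Set E :=
  ⋂ W ∈ gVal D L, gNag (↑W) T

def gLoc (D m : Set E) : Set E :=
  {x | ∃ a ∈ D, ∃ b ∈ D, b ∉ m ∧ x = a / b}

/-- localization of `S[T]` at `P[T]` -/
def Nag {S : Subring E} (P : Ideal S) (T : E) : Set E :=
  {x | ∃ f g : E[X], (∀ i, f.coeff i ∈ S) ∧ (∀ i, g.coeff i ∈ S) ∧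
    ¬ InP P g ∧ x = f.eval T / g.eval T}

theorem common_den {D : Subring E} {q : Ideal D} (hq : q.IsPrime) {ι : Type*} (s : Finset ι)
    (u : ι → E) (hu : ∀ i ∈ s, u i ∈ gLoc (D : Set E) (Subtype.val '' (q : Set D))) :
    ∃ c : D, c ∉ q ∧ ∀ i ∈ s, (c : E) * u i ∈ D := by
  classical
  induction s using Finset.induction_on with
  | empty => exact ⟨1, fun h => hq.ne_top ((Ideal.eq_top_iff_one _).2 h), by simp⟩
  | insert a s ha ih =>
    obtain ⟨c, hc, hcs⟩ := ih (fun i hi => hu i (Finset.mem_insert_of_mem hi))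
    obtain ⟨x, hx, b, hb, hbq, he⟩ := hu a (Finset.mem_insert_self _ _)
    rw [mem_val hb] at hbq
    have hb0 : b ≠ 0 := by
      rintro rfl
      exact hbq q.zero_mem
    refine ⟨c * ⟨b, hb⟩, ?_, ?_⟩
    · intro h
      exact (hq.mem_or_mem h).elim hc hbq
    · intro i hi
      rcases Finset.mem_insert.1 hi with rfl | hi
      · have : ((c * ⟨b, hb⟩ : D) : E) * u i = c * x := by
          rw [he]; push_cast; field_simp
        rw [this]
        exact D.mul_mem c.2 hx
      · have : ((c * ⟨b, hb⟩ : D) : E) * u i = b * (c * u i) := by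
          push_cast; ring
        rw [this]
        exact D.mul_mem hb (hcs i hi)

theorem subset_gLoc {D : Subring E} {q : Ideal D} (hq : q.IsPrime) :
    (D : Set E) ⊆ gLoc (D : Set E) (Subtype.val '' (q : Set D)) := by
  intro x hx
  refine ⟨x, hx, 1, D.one_mem, ?_, by simp⟩
  rw [mem_val D.one_mem]
  intro h
  exact hq.ne_top ((Ideal.eq_top_iff_one _).2 h)

theorem gNag_loc {D : Subring E} {q : Ideal D} (hq : q.IsPrime) (T : E) :
    gNag (gLoc (D : Set E) (Subtype.val '' (q : Set D))) T = Nag q T := by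
  ext x
  constructor
  · rintro ⟨f, g, hf, hg, ⟨t, u, hu, hsum⟩, rfl⟩
    obtain ⟨c1, hc1, hc1'⟩ := common_den hq f.support f.coeff (fun i _ => hf i)
    obtain ⟨c2, hc2, hc2'⟩ := common_den hq g.support g.coeff (fun i _ => hg i)
    obtain ⟨c3, hc3, hc3'⟩ := common_den hq t u hu
    have hc1'' : ∀ i, (c1 : E) * f.coeff i ∈ D := by
      intro i
      by_cases h : i ∈ f.support
      · exact hc1' i h
      · rw [notMem_support_iff.1 h, mul_zero]; exact D.zero_mem
    have hc2'' : ∀ i, (c2 : E) * g.coeff i ∈ D := by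
      intro i
      by_cases h : i ∈ g.support
      · exact hc2' i h
      · rw [notMem_support_iff.1 h, mul_zero]; exact D.zero_mem
    have hne : ((c1 : E) * c2) ≠ 0 := by
      intro h
      rcases mul_eq_zero.1 h with h | h
      · exact hc1 (by rw [show c1 = 0 from Subtype.ext h]; exact q.zero_mem)
      · exact hc2 (by rw [show c2 = 0 from Subtype.ext h]; exact q.zero_mem)
    refine ⟨C ((c1 : E) * c2) * f, C ((c1 : E) * c2) * g, ?_, ?_, ?_, ?_⟩
    · intro i
      rw [coeff_C_mul, show (c1 : E) * c2 * f.coeff i = c2 * (c1 * f.coeff i) by ring]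
      exact D.mul_mem c2.2 (hc1'' i)
    · intro i
      rw [coeff_C_mul, mul_assoc]
      exact D.mul_mem c1.2 (hc2'' i)
    · intro h
      have key : ((c3 * (c1 * c2) : D) : E) ∈ (Subtype.val '' (q : Set D) : Set E) := by
        have e : ((c3 * (c1 * c2) : D) : E)
            = ∑ i ∈ t, ((c3 : E) * u i) * (C ((c1 : E) * c2) * g).coeff i := by
          calc ((c3 * (c1 * c2) : D) : E) = (c3 * (c1 * c2)) * ∑ i ∈ t, u i * g.coeff i := by
                rw [hsum]; push_cast; ring
            _ = _ := by
                rw [Finset.mul_sum]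
                refine Finset.sum_congr rfl fun i _ => ?_
                rw [coeff_C_mul]; ring
        rw [e]
        choose w hw hw' using h
        refine ⟨∑ i ∈ t.attach, ⟨(c3 : E) * u i, hc3' i i.2⟩ * w i,
          q.sum_mem (fun i _ => q.mul_mem_left _ (hw i)), ?_⟩
        rw [← Finset.sum_attach t]
        push_cast
        refine Finset.sum_congr rfl fun i _ => ?_
        rw [hw']
      rw [mem_val (c3 * (c1 * c2)).2] at key
      rcases hq.mem_or_mem key with h | h
      · exact hc3 h
      · exact (hq.mem_or_mem h).elim hc1 hc2
    · rw [eval_mul, eval_mul, eval_C, mul_div_mul_left _ _ hne]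
  · rintro ⟨f, g, hf, hg, hgP, rfl⟩
    refine ⟨f, g, fun i => subset_gLoc hq (hf i), fun i => subset_gLoc hq (hg i), ?_, rfl⟩
    unfold InP at hgP
    push Not at hgP
    obtain ⟨i, hi⟩ := hgP
    have hi0 : g.coeff i ≠ 0 := by
      intro h
      rw [h] at hi
      exact hi ⟨0, q.zero_mem, rfl⟩
    refine ⟨{i}, fun _ => 1 / g.coeff i, ?_, ?_⟩
    · intro j _
      exact ⟨1, D.one_mem, _, hg i, hi, rfl⟩
    · simp [hi0]

theorem val_local {L : Subfield E} {W : Subring E} (hW : (W : Set E) ⊆ L)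
    (h : ∀ x ∈ L, x ∈ W ∨ x⁻¹ ∈ W) : IsLocalRing W := by
  have : ValuationRing W := by
    refine { cond' := ?_ }
    intro a b
    by_cases ha : (a : E) = 0
    · exact ⟨0, Or.inr (by ext; simp [ha])⟩
    by_cases hb : (b : E) = 0
    · exact ⟨0, Or.inl (by ext; simp [hb])⟩
    rcases h ((b : E) / a) (L.div_mem (hW b.2) (hW a.2)) with h | h
    · refine ⟨⟨_, h⟩, Or.inl ?_⟩
      ext; push_cast; field_simp
    · refine ⟨⟨_, h⟩, Or.inr ?_⟩
      ext; push_cast; field_simp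
  infer_instance

theorem gNag_local {W : Subring E} [IsLocalRing W] (T : E) :
    gNag (W : Set E) T = Nag (IsLocalRing.maximalIdeal W) T := by
  rw [← gNag_loc (IsLocalRing.maximalIdeal.isMaximal W).isPrime]
  congr 1
  apply Set.Subset.antisymm (subset_gLoc (IsLocalRing.maximalIdeal.isMaximal W).isPrime)
  rintro x ⟨a, ha, b, hb, hbm, rfl⟩
  rw [mem_val hb] at hbm
  have : IsUnit (⟨b, hb⟩ : W) := by
    by_contra h
    exact hbm ((IsLocalRing.mem_maximalIdeal _).2 h)
  obtain ⟨c, hc⟩ := this.exists_right_inv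
  have hc' : b * (c : E) = 1 := congrArg Subtype.val hc
  rw [show a / b = a * c from by
    have : b ≠ 0 := left_ne_zero_of_mul_eq_one hc'
    field_simp; rw [mul_assoc, hc', mul_one]]
  exact W.mul_mem ha c.2

theorem Nag_mul {S : Subring E} {P : Ideal S} (hP : P.IsPrime) {T x y : E}
    (hx : x ∈ Nag P T) (hy : y ∈ Nag P T) : x * y ∈ Nag P T := by
  obtain ⟨f, g, hf, hg, hgP, rfl⟩ := hx
  obtain ⟨f', g', hf', hg', hgP', rfl⟩ := hy
  refine ⟨f * f', g * g', coefs_mul hf hf', coefs_mul hg hg', ?_, ?_⟩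
  · rw [inP_mul_iff hP hg hg']; tauto
  · rw [eval_mul, eval_mul, div_mul_div_comm]

theorem gKr_mul {D : Set E} {L : Subfield E} {T x y : E} (hx : x ∈ gKr D L T)
    (hy : y ∈ gKr D L T) : x * y ∈ gKr D L T := by
  simp only [gKr, Set.mem_iInter] at hx hy ⊢
  intro W hW
  have := val_local hW.2.1 hW.2.2
  have h1 := hx W hW
  have h2 := hy W hW
  rw [gNag_local] at h1 h2 ⊢
  exact Nag_mul (IsLocalRing.maximalIdeal.isMaximal W).isPrime h1 h2

theorem max_elt {L : Subfield E} {W : Subring E} (h : ∀ x ∈ L, x ∈ W ∨ x⁻¹ ∈ W)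
    (s : Finset E) (hs : ∀ x ∈ s, x ∈ L) (hs0 : ∃ x ∈ s, x ≠ 0) :
    ∃ c ∈ s, c ≠ 0 ∧ ∀ x ∈ s, x / c ∈ W := by
  classical
  induction s using Finset.induction_on with
  | empty => simp at hs0
  | insert a s ha ih =>
    have haL := hs a (Finset.mem_insert_self _ _)
    by_cases h0 : ∃ x ∈ s, x ≠ 0
    · obtain ⟨c, hcs, hc0, hc⟩ := ih (fun i hi => hs i (Finset.mem_insert_of_mem hi)) h0
      have hcL := hs c (Finset.mem_insert_of_mem hcs)
      rcases h (a / c) (L.div_mem haL hcL) with h1 | h1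
      · refine ⟨c, Finset.mem_insert_of_mem hcs, hc0, ?_⟩
        intro x hx
        rcases Finset.mem_insert.1 hx with rfl | hx
        · exact h1
        · exact hc x hx
      · by_cases ha0 : a = 0
        · refine ⟨c, Finset.mem_insert_of_mem hcs, hc0, ?_⟩
          intro x hx
          rcases Finset.mem_insert.1 hx with rfl | hx
          · simp [ha0]
          · exact hc x hx
        · refine ⟨a, Finset.mem_insert_self _ _, ha0, ?_⟩
          intro x hx
          rcases Finset.mem_insert.1 hx with rfl | hx
          · rw [div_self ha0]; exact W.one_mem
          · have := W.mul_mem (hc x hx) h1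
            rwa [inv_div, div_mul_div_cancel₀ hc0] at this
    · push Not at h0
      obtain ⟨x, hx, hx0⟩ := hs0
      have hxa : x = a := by
        rcases Finset.mem_insert.1 hx with rfl | hx
        · rfl
        · exact absurd (h0 x hx) hx0
      subst hxa
      refine ⟨x, hx, hx0, ?_⟩
      intro y hy
      rcases Finset.mem_insert.1 hy with rfl | hy
      · rw [div_self hx0]; exact W.one_mem
      · rw [h0 y hy, zero_div]; exact W.zero_mem

/-- key membership: if the coefficients of `f` occur among those of `g`, then `f/g` is in the
Kronecker function ring. -/
theorem gKr_of_coeff {D : Set E} {L : Subfield E} {T : E} {f g : E[X]} (hg0 : g ≠ 0)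
    (hg : ∀ i, g.coeff i ∈ L) (hfg : ∀ i, ∃ j, f.coeff i = g.coeff j) :
    f.eval T / g.eval T ∈ gKr D L T := by
  classical
  simp only [gKr, Set.mem_iInter]
  intro W hW
  obtain ⟨c, hcs, hc0, hc⟩ := max_elt hW.2.2 (g.support.image g.coeff)
    (by intro x hx
        obtain ⟨i, _, rfl⟩ := Finset.mem_image.1 hx
        exact hg i)
    (by obtain ⟨i, hi⟩ := Polynomial.nonempty_support_iff.2 hg0
        exact ⟨_, Finset.mem_image_of_mem _ hi, mem_support_iff.1 hi⟩)
  obtain ⟨i, _, hi⟩ := Finset.mem_image.1 hcs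
  have hc' : ∀ j, c⁻¹ * g.coeff j ∈ W := by
    intro j
    by_cases hj : g.coeff j = 0
    · rw [hj, mul_zero]; exact W.zero_mem
    · rw [mul_comm, ← div_eq_mul_inv]
      exact hc _ (Finset.mem_image_of_mem _ (mem_support_iff.2 hj))
  refine ⟨C c⁻¹ * f, C c⁻¹ * g, ?_, ?_, ⟨{i}, fun _ => 1, fun _ _ => W.one_mem, ?_⟩, ?_⟩
  · intro k
    obtain ⟨j, hj⟩ := hfg k
    rw [coeff_C_mul, hj]
    exact hc' j
  · intro k
    rw [coeff_C_mul]
    exact hc' k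
  · simp [coeff_C_mul, hi, hc0]
  · rw [eval_mul, eval_mul, eval_C, mul_div_mul_left _ _ (inv_ne_zero hc0)]

theorem subset_gKr {D : Set E} {L : Subfield E} {T : E} : D ⊆ gKr D L T := by
  intro x hx
  simp only [gKr, Set.mem_iInter]
  intro W hW
  refine ⟨C x, 1, coefs_C (hW.1 hx), coefs_one, ⟨{0}, fun _ => 1, fun _ _ => W.one_mem, ?_⟩, ?_⟩
  · simp
  · simp

theorem gKr_one {D : Set E} {L : Subfield E} {T : E} : (1 : E) ∈ gKr D L T := by
  simpa using gKr_of_coeff (D := D) (L := L) (T := T) (f := 1) (g := 1) one_ne_zero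
    (coefs_one (S := L.toSubring)) (fun i => ⟨i, rfl⟩)

theorem gKr_T {D : Set E} {L : Subfield E} {T : E} : T ∈ gKr D L T := by
  simp only [gKr, Set.mem_iInter]
  intro W hW
  refine ⟨X, 1, coefs_X, coefs_one, ⟨{0}, fun _ => 1, fun _ _ => W.one_mem, ?_⟩, ?_⟩
  · simp
  · simp

theorem gKr_Tinv {D : Set E} {L : Subfield E} {T : E} : T⁻¹ ∈ gKr D L T := by
  simp only [gKr, Set.mem_iInter]
  intro W hW
  refine ⟨1, X, coefs_one, coefs_X, ⟨{1}, fun _ => 1, fun _ _ => W.one_mem, ?_⟩, ?_⟩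
  · simp
  · simp

theorem gKr_pow {D : Set E} {L : Subfield E} {T x : E} (hx : x ∈ gKr D L T) (n : ℕ) :
    x ^ n ∈ gKr D L T := by
  induction n with
  | zero => simpa using gKr_one
  | succ n ih => rw [pow_succ]; exact gKr_mul ih hx


structure Step (D : Set E) (L : Subfield E) (T : E) (A M : Set E) : Prop where
  tr : ∀ f : E[X], (∀ i, f.coeff i ∈ L) → f ≠ 0 → f.eval T ≠ 0
  MA : M ⊆ A
  tM : T⁻¹ ∈ M
  arch : ∀ f g : E[X], (∀ i, f.coeff i ∈ L) → (∀ i, g.coeff i ∈ L) →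
    ∃ N0 : ℕ, ∀ N ≥ N0, f.eval T / g.eval T * T⁻¹ ^ N ∈ M
  sq : ∀ m ∈ M, m * m * T ∈ M
  Msub : ∀ a ∈ M, ∀ b ∈ M, a - b ∈ M
  Ainv : ∀ a ∈ A, a ∉ M → a⁻¹ ∈ A
  DA : D ⊆ A
  DL : D ⊆ L

namespace Step
variable {D : Set E} {L : Subfield E} {T : E} {A M : Set E}

theorem T0 (h : Step D L T A M) : T ≠ 0 := by
  have := h.tr X (coefs_X (S := L.toSubring)) X_ne_zero
  simpa using this

theorem tpow (h : Step D L T A M) : ∃ N0 : ℕ, ∀ N ≥ N0, T⁻¹ ^ N ∈ M := by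
  obtain ⟨N0, hN⟩ := h.arch 1 1 (coefs_one (S := L.toSubring)) (coefs_one (S := L.toSubring))
  exact ⟨N0, fun N hN' => by simpa using hN N hN'⟩

theorem selfVal (L : Subfield E) {D : Set E} (hD : D ⊆ L) : L.toSubring ∈ gVal D L :=
  ⟨hD, fun _ h => h, fun _ h => Or.inl h⟩

/-- elements of the Kronecker function ring are rational functions -/
theorem rat (h : Step D L T A M) {x : E} (hx : x ∈ gKr D L T) :
    ∃ f g : E[X], (∀ i, f.coeff i ∈ L) ∧ (∀ i, g.coeff i ∈ L) ∧ x = f.eval T / g.eval T := by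
  simp only [gKr, Set.mem_iInter] at hx
  obtain ⟨f, g, hf, hg, -, e⟩ := hx L.toSubring (selfVal L h.DL)
  exact ⟨f, g, hf, hg, e⟩

theorem inD (h : Step D L T A M) {x : E} (hx : x ∈ gKr D L T) :
    ∃ N0 : ℕ, ∀ N ≥ N0, x * T⁻¹ ^ N ∈ gKr D L T ∩ A := by
  obtain ⟨f, g, hf, hg, e⟩ := h.rat hx
  obtain ⟨N0, hN⟩ := h.arch f g hf hg
  refine ⟨N0, fun N hN' => ⟨gKr_mul hx (gKr_pow gKr_Tinv N), h.MA ?_⟩⟩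
  rw [e]
  exact hN N hN'

theorem tD (h : Step D L T A M) : T⁻¹ ∈ gKr D L T ∩ A := ⟨gKr_Tinv, h.MA h.tM⟩

theorem subD (h : Step D L T A M) : D ⊆ gKr D L T ∩ A := fun _ hx => ⟨subset_gKr hx, h.DA hx⟩

theorem coeff_cases {f g : E[X]} {N : ℕ} (hN : g.natDegree < N) (i : ℕ) :
    ∃ j, g.coeff i = (f * X ^ N + g).coeff j := by
  by_cases hi : i < N
  · refine ⟨i, ?_⟩
    rw [coeff_add, coeff_mul_X_pow', if_neg (by omega), zero_add]
  · refine ⟨(f * X ^ N + g).natDegree + 1, ?_⟩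
    rw [coeff_eq_zero_of_natDegree_lt (by omega), coeff_eq_zero_of_natDegree_lt (by omega)]

theorem coeff_cases' {f g : E[X]} {N : ℕ} (hN : g.natDegree < N) (i : ℕ) :
    ∃ j, f.coeff i = (f * X ^ N + g).coeff j := by
  refine ⟨i + N, ?_⟩
  rw [coeff_add, coeff_mul_X_pow, coeff_eq_zero_of_natDegree_lt (p := g) (by omega), add_zero]

theorem inv_add (h : Step D L T A M) {a : E} (ha : a ∈ gKr D L T) :
    ∃ N0 : ℕ, ∀ N ≥ N0, (a + T⁻¹ ^ N)⁻¹ ∈ gKr D L T := by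
  obtain ⟨f, g, hf, hg, e⟩ := h.rat ha
  by_cases hg0 : g = 0
  · refine ⟨0, fun N _ => ?_⟩
    rw [e, hg0]
    simpa using gKr_pow gKr_T N
  have hgT := h.tr g hg hg0
  have hT := h.T0
  refine ⟨g.natDegree + 1, fun N hN => ?_⟩
  have hh0 : f * X ^ N + g ≠ 0 := by
    intro h0
    apply hg0
    ext i
    obtain ⟨j, hj⟩ := coeff_cases (f := f) (g := g) (N := N) (by omega) i
    rw [hj, h0, coeff_zero, coeff_zero]
  have hhL : ∀ i, (f * X ^ N + g).coeff i ∈ L :=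
    coefs_add (S := L.toSubring) (coefs_mul (S := L.toSubring) hf (coefs_Xpow N)) hg
  have hhT := h.tr _ hhL hh0
  have key := gKr_mul (gKr_of_coeff (D := D) (T := T) hh0 hhL
    (coeff_cases (f := f) (g := g) (N := N) (by omega))) (gKr_pow gKr_T N)
  convert key using 1
  rw [e]
  simp only [eval_add, eval_mul, eval_pow, eval_X] at hhT ⊢
  have : eval T f / eval T g + T⁻¹ ^ N = (eval T f * T ^ N + eval T g) / (eval T g * T ^ N) := by
    rw [inv_pow]; field_simp
  rw [this, inv_div, div_mul_eq_mul_div]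

/-- primes containing `T⁻¹` -/
theorem eq_MM (h : Step D L T A M) {D' : Subring E} (hD' : (D' : Set E) = gKr D L T ∩ A)
    {q : Ideal D'} (hq : q.IsPrime) (ht : T⁻¹ ∈ (Subtype.val '' (q : Set D') : Set E)) :
    (Subtype.val '' (q : Set D') : Set E) = M ∩ (gKr D L T ∩ A) := by
  have mem : ∀ x, x ∈ D' ↔ x ∈ gKr D L T ∩ A := fun x => by rw [← hD']; rfl
  have htD : T⁻¹ ∈ D' := (mem _).2 h.tD
  rw [mem_val htD] at ht
  have hT := h.T0
  apply Set.Subset.antisymm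
  · rintro _ ⟨a, ha, rfl⟩
    refine ⟨?_, (mem _).1 a.2⟩
    by_contra haM
    obtain ⟨N1, h1⟩ := h.inv_add ((mem _).1 a.2).1
    obtain ⟨N2, h2⟩ := h.tpow
    set N := N1 + N2 + 1 with hN
    have h1 := h1 N (by omega)
    have h2 := h2 N (by omega)
    have hb : (a + ⟨T⁻¹, htD⟩ ^ N : D') ∈ q :=
      q.add_mem ha (q.pow_mem_of_mem ht N (by omega))
    have hbv : ((a + ⟨T⁻¹, htD⟩ ^ N : D') : E) = a + T⁻¹ ^ N := by push_cast; rfl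
    have hbM : (a : E) + T⁻¹ ^ N ∉ M := by
      intro hc
      apply haM
      have := h.Msub _ hc _ h2
      simpa using this
    have hbA : (a : E) + T⁻¹ ^ N ∈ A := by
      rw [← hbv]
      exact ((mem _).1 (a + ⟨T⁻¹, htD⟩ ^ N : D').2).2
    have hinv := h.Ainv _ hbA hbM
    have hb0 : (a : E) + T⁻¹ ^ N ≠ 0 := by
      intro h0
      apply hbM
      rw [h0]
      simpa using h.Msub _ h2 _ h2
    have hinvD : ((a : E) + T⁻¹ ^ N)⁻¹ ∈ D' := (mem _).2 ⟨h1, hinv⟩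
    have : (1 : D') ∈ q := by
      have := q.mul_mem_left ⟨_, hinvD⟩ hb
      convert this using 1
      ext
      push_cast
      rw [inv_mul_cancel₀ hb0]
    exact hq.ne_top ((Ideal.eq_top_iff_one _).2 this)
  · rintro m ⟨hmM, hmD⟩
    have hm' := (mem _).2 hmD
    rw [mem_val hm']
    have hs : m * m * T ∈ D' := (mem _).2 ⟨gKr_mul (gKr_mul hmD.1 hmD.1) gKr_T, h.MA (h.sq m hmM)⟩
    have : (⟨m, hm'⟩ * ⟨m, hm'⟩ : D') ∈ q := by
      have := q.mul_mem_left ⟨_, hs⟩ ht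
      convert this using 1
      ext
      push_cast
      field_simp
    exact (hq.mem_or_mem this).elim id id

theorem val_of_prime (h : Step D L T A M) {D' : Subring E} (hD' : (D' : Set E) = gKr D L T ∩ A)
    {q : Ideal D'} (hq : q.IsPrime) (ht : T⁻¹ ∉ (Subtype.val '' (q : Set D') : Set E))
    {f g : E[X]} (hf : ∀ i, f.coeff i ∈ L) (hg : ∀ i, g.coeff i ∈ L) :
    f.eval T / g.eval T ∈ gLoc (D' : Set E) (Subtype.val '' (q : Set D')) ∨
    (f.eval T / g.eval T)⁻¹ ∈ gLoc (D' : Set E) (Subtype.val '' (q : Set D')) := by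
  have mem : ∀ x, x ∈ D' ↔ x ∈ gKr D L T ∩ A := fun x => by rw [← hD']; rfl
  have htD : T⁻¹ ∈ D' := (mem _).2 h.tD
  have hT := h.T0
  by_cases hg0 : g = 0
  · left
    rw [hg0, eval_zero, div_zero]
    exact subset_gLoc hq D'.zero_mem
  have hgT := h.tr g hg hg0
  rw [mem_val htD] at ht
  set N := g.natDegree + 1 with hNdef
  have hh0 : f * X ^ N + g ≠ 0 := by
    intro h0
    apply hg0
    ext i
    obtain ⟨j, hj⟩ := coeff_cases (f := f) (g := g) (N := N) (by omega) i
    rw [hj, h0, coeff_zero, coeff_zero]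
  have hhL : ∀ i, (f * X ^ N + g).coeff i ∈ L :=
    coefs_add (S := L.toSubring) (coefs_mul (S := L.toSubring) hf (coefs_Xpow N)) hg
  have hhT := h.tr _ hhL hh0
  have hgB := gKr_of_coeff (D := D) (T := T) hh0 hhL
    (coeff_cases (f := f) (g := g) (N := N) (by omega))
  have hfB := gKr_of_coeff (D := D) (T := T) hh0 hhL
    (coeff_cases' (f := f) (g := g) (N := N) (by omega))
  obtain ⟨N1, h1⟩ := h.inD hgB
  obtain ⟨N2, h2⟩ := h.inD hfB
  have h1 := (mem _).2 (h1 (N1 + N2) (by omega))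
  have h2 := (mem _).2 (h2 (N1 + N2) (by omega))
  set H := eval T (f * X ^ N + g) with hH
  have hH' : H = eval T f * T ^ N + eval T g := by simp [hH]
  by_cases hv : (⟨_, h1⟩ : D') ∈ q
  · right
    refine ⟨_, h1, _, h2, ?_, ?_⟩
    · rw [mem_val h2]
      intro hu
      apply ht
      have key : (⟨T⁻¹, htD⟩ ^ (N1 + N2 + N) : D') ∈ q := by
        have := q.add_mem hu (q.mul_mem_left (⟨T⁻¹, htD⟩ ^ N) hv)
        convert this using 1
        ext
        push_cast
        rw [pow_add]
        have : (T⁻¹ ^ N : E) = (eval T f + eval T g * T⁻¹ ^ N) / H := by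
          rw [eq_div_iff hhT, hH', inv_pow]; field_simp
        calc T⁻¹ ^ (N1 + N2) * T⁻¹ ^ N
            = T⁻¹ ^ (N1 + N2) * ((eval T f + eval T g * T⁻¹ ^ N) / H) := by rw [← this]
          _ = _ := by ring
      exact hq.mem_of_pow_mem _ key
    · rw [inv_div]
      field_simp
  · left
    refine ⟨_, h2, _, h1, ?_, ?_⟩
    · rwa [mem_val h1]
    · field_simp

/-- the localization as a subring -/
def locRing {D : Subring E} {q : Ideal D} (hq : q.IsPrime) : Subring E where
  carrier := gLoc (D : Set E) (Subtype.val '' (q : Set D))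
  one_mem' := subset_gLoc hq D.one_mem
  zero_mem' := subset_gLoc hq D.zero_mem
  neg_mem' := by
    rintro _ ⟨a, ha, b, hb, hbq, rfl⟩
    exact ⟨-a, D.neg_mem ha, b, hb, hbq, by ring⟩
  mul_mem' := by
    rintro _ _ ⟨a, ha, b, hb, hbq, rfl⟩ ⟨a', ha', b', hb', hbq', rfl⟩
    refine ⟨a * a', D.mul_mem ha ha', b * b', D.mul_mem hb hb', ?_, by rw [div_mul_div_comm]⟩
    rw [mem_val hb] at hbq
    rw [mem_val hb'] at hbq'
    rw [mem_val (D.mul_mem hb hb')]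
    exact fun h => (hq.mem_or_mem (x := ⟨b, hb⟩) (y := ⟨b', hb'⟩) h).elim hbq hbq'
  add_mem' := by
    rintro _ _ ⟨a, ha, b, hb, hbq, rfl⟩ ⟨a', ha', b', hb', hbq', rfl⟩
    rw [mem_val hb] at hbq
    rw [mem_val hb'] at hbq'
    have hb0 : b ≠ 0 := by
      rintro rfl
      exact hbq q.zero_mem
    have hb0' : b' ≠ 0 := by
      rintro rfl
      exact hbq' q.zero_mem
    refine ⟨a * b' + b * a', D.add_mem (D.mul_mem ha hb') (D.mul_mem hb ha'), b * b',
      D.mul_mem hb hb', ?_, by rw [div_add_div _ _ hb0 hb0']⟩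
    rw [mem_val (D.mul_mem hb hb')]
    exact fun h => (hq.mem_or_mem (x := ⟨b, hb⟩) (y := ⟨b', hb'⟩) h).elim hbq hbq'

theorem main {D : Subring E} (h : Step (D : Set E) L T A M) {D' : Subring E}
    (hD' : (D' : Set E) = gKr (D : Set E) L T ∩ A) {q' : Ideal D} (hq' : q'.IsPrime)
    (hval : ∀ x ∈ L, x ∈ gLoc (D : Set E) (Subtype.val '' (q' : Set D)) ∨
      x⁻¹ ∈ gLoc (D : Set E) (Subtype.val '' (q' : Set D))) :
    ∃ q : Ideal D', q.IsPrime ∧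
      (Subtype.val '' (q : Set D') : Set E) ≠ M ∩ (gKr (D : Set E) L T ∩ A) ∧
      (Subtype.val '' (q : Set D') : Set E) ∩ D = Subtype.val '' (q' : Set D) ∧
      (∀ q₂ : Ideal D', q₂.IsPrime →
        (Subtype.val '' (q₂ : Set D') : Set E) ≠ M ∩ (gKr (D : Set E) L T ∩ A) →
        (Subtype.val '' (q₂ : Set D') : Set E) ∩ D = Subtype.val '' (q' : Set D) → q₂ = q) ∧
      gLoc (D' : Set E) (Subtype.val '' (q : Set D')) =
        gNag (gLoc (D : Set E) (Subtype.val '' (q' : Set D))) T := by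
  have mem : ∀ x, x ∈ D' ↔ x ∈ gKr (D : Set E) L T ∩ A := fun x => by rw [← hD']; rfl
  have htD : T⁻¹ ∈ D' := (mem _).2 h.tD
  have hT := h.T0
  have hDD' : ∀ x, x ∈ D → x ∈ D' := fun x hx => (mem _).2 (h.subD hx)
  have hDL : ∀ {f : E[X]}, (∀ i, f.coeff i ∈ D) → ∀ i, f.coeff i ∈ L :=
    fun hf i => h.DL (hf i)
  have tr : ∀ {f : E[X]}, (∀ i, f.coeff i ∈ D) → f ≠ 0 → f.eval T ≠ 0 :=
    fun hf hf0 => h.tr _ (hDL hf) hf0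
  have trQ : ∀ {f : E[X]}, (∀ i, f.coeff i ∈ D) → ¬ InP q' f → f.eval T ≠ 0 :=
    fun hf hf0 => tr hf (ne_zero_of_not_inP hf0)
  have inj : ∀ {f g : E[X]}, (∀ i, f.coeff i ∈ D) → (∀ i, g.coeff i ∈ D) →
      f.eval T = g.eval T → f = g := by
    intro f g hf hg e
    by_contra hne
    have h1 : ∀ i, (f + -g).coeff i ∈ D := coefs_add hf (coefs_neg hg)
    apply tr h1
    · rwa [← sub_eq_add_neg, sub_ne_zero]
    · simp [e]
  rw [gNag_loc hq']
  have hnag : ∀ x ∈ D', x ∈ Nag q' T := by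
    intro x hx
    have hx := ((mem x).1 hx).1
    simp only [gKr, Set.mem_iInter] at hx
    have h1 := hx (locRing hq') ⟨subset_gLoc hq', ?_, hval⟩
    · rw [← gNag_loc hq']; exact h1
    · rintro _ ⟨a, ha, b, hb, -, rfl⟩
      exact L.div_mem (h.DL ha) (h.DL hb)
  have inQ : ∀ {f : E[X]}, InP q' f → ∀ i, f.coeff i ∈ D := fun hf i => val_mem (hf i)
  -- cross-multiplication
  have cross : ∀ {f g f' g' : E[X]}, (∀ i, f.coeff i ∈ D) → (∀ i, g.coeff i ∈ D) →
      (∀ i, f'.coeff i ∈ D) → (∀ i, g'.coeff i ∈ D) → ¬ InP q' g → ¬ InP q' g' →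
      f.eval T / g.eval T = f'.eval T / g'.eval T → InP q' f → InP q' f' := by
    intro f g f' g' hf hg hf' hg' hgQ hgQ' e hfQ
    have e' : f * g' = f' * g := by
      apply inj (coefs_mul hf hg') (coefs_mul hf' hg)
      rw [eval_mul, eval_mul]
      rwa [div_eq_div_iff (trQ hg hgQ) (trQ hg' hgQ')] at e
    have : InP q' (f' * g) := by
      rw [← e']
      exact (inP_mul_iff hq' hf hg').2 (Or.inl hfQ)
    exact ((inP_mul_iff hq' hf' hg).1 this).resolve_right hgQ
  let q : Ideal D' :=
    { carrier := {x | ∃ f g : E[X], InP q' f ∧ (∀ i, g.coeff i ∈ D) ∧ ¬ InP q' g ∧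
        (x : E) = f.eval T / g.eval T}
      zero_mem' := ⟨0, 1, fun i => ⟨0, q'.zero_mem, by simp⟩, coefs_one, not_inP_one hq', by simp⟩
      add_mem' := by
        rintro x y ⟨f, g, hf, hg, hgQ, e⟩ ⟨f', g', hf', hg', hgQ', e'⟩
        refine ⟨f * g' + g * f', g * g', inP_add ?_ ?_, coefs_mul hg hg', ?_, ?_⟩
        · exact (inP_mul_iff hq' (inQ hf) hg').2 (Or.inl hf)
        · exact (inP_mul_iff hq' hg (inQ hf')).2 (Or.inr hf')
        · rw [inP_mul_iff hq' hg hg']; tauto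
        · push_cast
          rw [e, e', div_add_div _ _ (trQ hg hgQ) (trQ hg' hgQ')]
          simp
      smul_mem' := by
        rintro c x ⟨f, g, hf, hg, hgQ, e⟩
        obtain ⟨f', g', hf', hg', hgQ', e'⟩ := hnag c c.2
        refine ⟨f' * f, g' * g, (inP_mul_iff hq' hf' (inQ hf)).2 (Or.inr hf), coefs_mul hg' hg,
          ?_, ?_⟩
        · rw [inP_mul_iff hq' hg' hg]; tauto
        · rw [smul_eq_mul, Subring.coe_mul, e, e', div_mul_div_comm, eval_mul, eval_mul] }
  have memq : ∀ x : D', x ∈ q ↔ ∃ f g : E[X], InP q' f ∧ (∀ i, g.coeff i ∈ D) ∧ ¬ InP q' g ∧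
        (x : E) = f.eval T / g.eval T := fun x => Iff.rfl
  have memq' : ∀ (x : D') {f g : E[X]}, (∀ i, f.coeff i ∈ D) → (∀ i, g.coeff i ∈ D) →
      ¬ InP q' g → (x : E) = f.eval T / g.eval T → (x ∈ q ↔ InP q' f) := by
    intro x f g hf hg hgQ e
    constructor
    · intro hx
      obtain ⟨f', g', hf', hg', hgQ', e'⟩ := (memq x).1 hx
      exact cross (inQ hf') hg' hf hg hgQ' hgQ (e'.symm.trans e) hf'
    · intro hfQ
      exact (memq x).2 ⟨f, g, hfQ, hg, hgQ, e⟩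
  -- numerators and denominators
  have polyB : ∀ {f : E[X]}, (∀ i, f.coeff i ∈ D) →
      ∃ N0 : ℕ, ∀ N ≥ N0, f.eval T * T⁻¹ ^ N ∈ D' := by
    intro f hf
    have hfB : f.eval T ∈ gKr (D : Set E) L T := by
      simp only [gKr, Set.mem_iInter]
      intro W hW
      refine ⟨f, 1, fun i => hW.1 (hf i), coefs_one,
        ⟨{0}, fun _ => 1, fun _ _ => W.one_mem, by simp⟩, by simp⟩
    obtain ⟨N0, h0⟩ := h.inD hfB
    exact ⟨N0, fun N hN => (mem _).2 (h0 N hN)⟩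
  have evT : ∀ (f : E[X]) (N : ℕ), f.eval T * T⁻¹ ^ N = f.eval T / (X ^ N : E[X]).eval T := by
    intro f N
    rw [eval_pow, eval_X, div_eq_mul_inv, inv_pow]
  refine ⟨q, ?_, ?_, ?_, ?_, ?_⟩
  · refine Ideal.isPrime_iff.2 ⟨?_, ?_⟩
    · rw [Ideal.ne_top_iff_one, memq' 1 coefs_one coefs_one (not_inP_one hq') (by simp)]
      exact not_inP_one hq'
    · intro x y hxy
      obtain ⟨f, g, hf, hg, hgQ, e⟩ := hnag x x.2
      obtain ⟨f', g', hf', hg', hgQ', e'⟩ := hnag y y.2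
      rw [memq' x hf hg hgQ e, memq' y hf' hg' hgQ' e']
      rw [memq' (x * y) (coefs_mul hf hf') (coefs_mul hg hg')
        (by rw [inP_mul_iff hq' hg hg']; tauto)
        (by rw [Subring.coe_mul, e, e', div_mul_div_comm, eval_mul, eval_mul])] at hxy
      exact (inP_mul_iff hq' hf hf').1 hxy
  · intro heq
    have h1 : T⁻¹ ∈ (Subtype.val '' (q : Set D') : Set E) := by
      rw [heq]
      exact ⟨h.tM, h.tD⟩
    rw [mem_val htD, memq' _ (f := 1) (g := X ^ 1) coefs_one (coefs_Xpow 1)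
      (not_inP_Xpow hq' 1) (by simp)] at h1
    exact not_inP_one hq' h1
  · ext x
    constructor
    · rintro ⟨hx, hxD⟩
      rw [mem_val (hDD' x hxD), memq' _ (f := C x) (g := 1) (coefs_C hxD) coefs_one
        (not_inP_one hq') (by simp), inP_C] at hx
      exact hx
    · intro hx
      have hxD := val_mem hx
      refine ⟨?_, hxD⟩
      rw [mem_val (hDD' x hxD), memq' _ (f := C x) (g := 1) (coefs_C hxD) coefs_one
        (not_inP_one hq') (by simp), inP_C]
      exact hx
  · intro q₂ hq₂ hne hcon
    have ht : T⁻¹ ∉ (Subtype.val '' (q₂ : Set D') : Set E) := fun h1 => hne (h.eq_MM hD' hq₂ h1)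
    rw [mem_val htD] at ht
    have htN : ∀ N : ℕ, (⟨T⁻¹, htD⟩ ^ N : D') ∉ q₂ := fun N h1 => ht (hq₂.mem_of_pow_mem _ h1)
    have con : ∀ x (hx : x ∈ D), (⟨x, hDD' x hx⟩ : D') ∈ q₂ ↔
        x ∈ (Subtype.val '' (q' : Set D) : Set E) := by
      intro x hx
      rw [← hcon, ← mem_val (P := q₂) (hDD' x hx)]
      exact ⟨fun h1 => ⟨h1, hx⟩, fun h1 => h1.1⟩
    -- the key claim
    have claim : ∀ {g : E[X]} (N : ℕ) (hN : g.eval T * T⁻¹ ^ N ∈ D'), (∀ i, g.coeff i ∈ D) →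
        ((⟨_, hN⟩ : D') ∈ q₂) → InP q' g := by
      intro g N hN hg hgq
      by_contra hgQ
      have hgT := trQ hg hgQ
      have hg0 := ne_zero_of_not_inP hgQ
      apply hgQ
      intro i
      rw [← con _ (hg i)]
      have hB : (C (g.coeff i)).eval T / g.eval T ∈ gKr (D : Set E) L T := by
        apply gKr_of_coeff hg0 (hDL hg)
        intro j
        rw [coeff_C]
        split_ifs
        · exact ⟨i, rfl⟩
        · exact ⟨g.natDegree + 1, by rw [coeff_eq_zero_of_natDegree_lt (by omega)]⟩
      obtain ⟨N1, h1⟩ := h.inD hB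
      have h1 := (mem _).2 (h1 N1 le_rfl)
      have : (⟨g.coeff i, hDD' _ (hg i)⟩ * ⟨T⁻¹, htD⟩ ^ (N1 + N) : D') ∈ q₂ := by
        have := q₂.mul_mem_left ⟨_, h1⟩ hgq
        convert this using 1
        ext
        push_cast
        rw [eval_C]
        simp only [inv_pow, pow_add]
        field_simp
      exact (hq₂.mem_or_mem this).resolve_right (htN _)
    have claim' : ∀ {f : E[X]} (N : ℕ) (hN : f.eval T * T⁻¹ ^ N ∈ D'), InP q' f →
        ((⟨_, hN⟩ : D') ∈ q₂) := by
      intro f N hN hf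
      have hfD := inQ hf
      have key : (⟨_, hN⟩ * ⟨T⁻¹, htD⟩ ^ f.natDegree : D') ∈ q₂ := by
        have : (⟨_, hN⟩ * ⟨T⁻¹, htD⟩ ^ f.natDegree : D')
            = (∑ i ∈ Finset.range (f.natDegree + 1),
              ⟨f.coeff i, hDD' _ (hfD i)⟩ * ⟨T⁻¹, htD⟩ ^ (f.natDegree - i)) * ⟨T⁻¹, htD⟩ ^ N := by
          ext
          push_cast
          rw [eval_eq_sum_range, Finset.sum_mul, Finset.sum_mul, Finset.sum_mul]
          refine Finset.sum_congr rfl fun i hi => ?_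
          have hi : i ≤ f.natDegree := by
            have := Finset.mem_range.1 hi
            omega
          obtain ⟨d, hd⟩ := Nat.exists_eq_add_of_le hi
          rw [hd, Nat.add_sub_cancel_left]
          simp only [inv_pow, pow_add]
          field_simp
        rw [this]
        refine q₂.mul_mem_right _ (q₂.sum_mem fun i _ => q₂.mul_mem_right _ ?_)
        rw [con _ (hfD i)]
        exact hf i
      exact (hq₂.mem_or_mem key).resolve_right (htN _)
    ext x
    obtain ⟨f, g, hf, hg, hgQ, e⟩ := hnag x x.2
    rw [memq' x hf hg hgQ e]
    obtain ⟨N1, h1⟩ := polyB hf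
    obtain ⟨N2, h2⟩ := polyB hg
    have h1 := h1 (N1 + N2) (by omega)
    have h2 := h2 (N1 + N2) (by omega)
    have hgT := trQ hg hgQ
    have e2 : x * ⟨_, h2⟩ = (⟨_, h1⟩ : D') := by
      ext
      push_cast
      rw [e]
      field_simp
    constructor
    · intro hx
      apply claim _ h1 hf
      rw [← e2]
      exact q₂.mul_mem_right _ hx
    · intro hfQ
      have h3 := claim' _ h1 hfQ
      rw [← e2] at h3
      refine (hq₂.mem_or_mem h3).resolve_right fun h4 => hgQ (claim _ h2 hg h4)
  · ext x
    constructor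
    · rintro ⟨a, ha, b, hb, hbq, rfl⟩
      obtain ⟨f, g, hf, hg, hgQ, e⟩ := hnag a ha
      obtain ⟨f', g', hf', hg', hgQ', e'⟩ := hnag b hb
      rw [mem_val hb, memq' _ hf' hg' hgQ' e'] at hbq
      refine ⟨f * g', g * f', coefs_mul hf hg', coefs_mul hg hf', ?_, ?_⟩
      · rw [inP_mul_iff hq' hg hf']; tauto
      · rw [e, e', div_div_div_eq, eval_mul, eval_mul]
    · rintro ⟨f, g, hf, hg, hgQ, rfl⟩
      obtain ⟨N1, h1⟩ := polyB hf
      obtain ⟨N2, h2⟩ := polyB hg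
      have h1 := h1 (N1 + N2) (by omega)
      have h2 := h2 (N1 + N2) (by omega)
      refine ⟨_, h1, _, h2, ?_, ?_⟩
      · rw [mem_val h2, memq' _ hg (coefs_Xpow _) (not_inP_Xpow hq' _) (evT g _)]
        exact hgQ
      · have := trQ hg hgQ
        field_simp

end Step
end generic
end TowerAux


namespace TowerAux
open Polynomial
section generic2
variable {E : Type*} [Field E]

theorem eval_map_sub {F : Subfield E} (f : F[X]) (y : E) :
    (f.map F.toSubring.subtype).eval y = aeval y f := by
  rw [aeval_def, eval_map]
  rfl

theorem mem_ring {F : Subfield E} {y x : E} :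
    x ∈ Subring.closure ((F : Set E) ∪ {y}) ↔ ∃ f : E[X], (∀ i, f.coeff i ∈ F) ∧ x = f.eval y := by
  constructor
  · intro hx
    induction hx using Subring.closure_induction with
    | mem x hx =>
      rcases hx with hx | hx
      · exact ⟨C x, coefs_C (S := F.toSubring) hx, by simp⟩
      · rw [Set.mem_singleton_iff] at hx
        exact ⟨X, coefs_X (S := F.toSubring), by simp [hx]⟩
    | zero => exact ⟨0, fun i => by simp [F.zero_mem], by simp⟩
    | one => exact ⟨1, coefs_one (S := F.toSubring), by simp⟩
    | add x y _ _ hx hy =>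
      obtain ⟨f, hf, rfl⟩ := hx
      obtain ⟨g, hg, rfl⟩ := hy
      exact ⟨f + g, coefs_add (S := F.toSubring) hf hg, by simp⟩
    | neg x _ hx =>
      obtain ⟨f, hf, rfl⟩ := hx
      exact ⟨-f, coefs_neg (S := F.toSubring) hf, by simp⟩
    | mul x y _ _ hx hy =>
      obtain ⟨f, hf, rfl⟩ := hx
      obtain ⟨g, hg, rfl⟩ := hy
      exact ⟨f * g, coefs_mul (S := F.toSubring) hf hg, by simp⟩
  · rintro ⟨f, hf, rfl⟩
    rw [eval_eq_sum_range]
    refine Subring.sum_mem _ fun i _ => Subring.mul_mem _ ?_ (Subring.pow_mem _ ?_ _)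
    · exact Subring.subset_closure (Or.inl (hf i))
    · exact Subring.subset_closure (Or.inr rfl)

theorem eval_mem {F K : Subfield E} {y : E} (hF : F ≤ K) (hy : y ∈ K) {f : E[X]}
    (hf : ∀ i, f.coeff i ∈ F) : f.eval y ∈ K := by
  rw [eval_eq_sum_range]
  exact K.sum_mem fun i _ => K.mul_mem (hF (hf i)) (K.pow_mem hy _)

theorem mem_field {F : Subfield E} {y x : E} (hx : x ∈ Subfield.closure ((F : Set E) ∪ {y})) :
    ∃ f g : E[X], (∀ i, f.coeff i ∈ F) ∧ (∀ i, g.coeff i ∈ F) ∧ x = f.eval y / g.eval y := by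
  have h1 : Subfield.closure ((F : Set E) ∪ {y}) ≤ (IntermediateField.adjoin F {y}).toSubfield := by
    rw [Subfield.closure_le]
    rintro z (hz | hz)
    · exact (IntermediateField.adjoin F {y}).algebraMap_mem ⟨z, hz⟩
    · rw [Set.mem_singleton_iff] at hz
      rw [hz]
      exact IntermediateField.mem_adjoin_simple_self F y
  have h2 : x ∈ IntermediateField.adjoin F {y} := h1 hx
  rw [IntermediateField.mem_adjoin_simple_iff] at h2
  obtain ⟨f, g, e⟩ := h2
  refine ⟨f.map F.toSubring.subtype, g.map F.toSubring.subtype, coefs_map (S := F.toSubring) f,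
    coefs_map (S := F.toSubring) g, ?_⟩
  rw [eval_map_sub, eval_map_sub, e]

/-- `y` is transcendental over `F` -/
def Tr (F : Subfield E) (y : E) : Prop :=
  ∀ f : E[X], (∀ i, f.coeff i ∈ F) → f ≠ 0 → f.eval y ≠ 0

theorem Tr.mono {F F' : Subfield E} {y : E} (h : F ≤ F') (hy : Tr F' y) : Tr F y :=
  fun f hf => hy f fun i => h (hf i)

theorem tr_of_transcendental {F : Subfield E} {y : E} (h : Transcendental F y) : Tr F y := by
  intro f hf hf0 he
  obtain ⟨f', rfl⟩ := exists_lift (S := F.toSubring) hf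
  apply hf0
  rw [transcendental_iff] at h
  have := h f' (by rw [← eval_map_sub]; exact he)
  rw [this, Polynomial.map_zero]

theorem Tr.add {F : Subfield E} {y a : E} (h : Tr F y) (ha : a ∈ F) : Tr F (y + a) := by
  intro f hf hf0
  obtain ⟨f', rfl⟩ := exists_lift (S := F.toSubring) hf
  have e : ((f'.comp (X + C ⟨a, ha⟩)).map F.toSubring.subtype).eval y
      = (f'.map F.toSubring.subtype).eval (y + a) := by
    rw [map_comp, eval_comp]
    simp
  rw [← e]
  apply h _ (coefs_map (S := F.toSubring) _)
  intro h0
  have h1 : f'.comp (X + C (⟨a, ha⟩ : F.toSubring)) = 0 :=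
    Polynomial.map_injective _ Subtype.val_injective (by rw [h0, Polynomial.map_zero])
  apply hf0
  have h2 : f' = 0 := by
    apply Polynomial.taylor_injective (⟨a, ha⟩ : F.toSubring)
    rw [taylor_apply, h1, map_zero]
  rw [h2, Polynomial.map_zero]

def gV (F : Subfield E) (y : E) : Set E :=
  {x | ∃ f ∈ Subring.closure ((F : Set E) ∪ {y}), ∃ g ∈ Subring.closure ((F : Set E) ∪ {y}),
    (¬ ∃ h ∈ Subring.closure ((F : Set E) ∪ {y}), g = y * h) ∧ x = f / g}

def gM (F : Subfield E) (y : E) : Set E := {x | ∃ v ∈ gV F y, x = y * v}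

def gA (k F : Subfield E) (y : E) : Set E := {x | ∃ c ∈ k, ∃ m ∈ gM F y, x = c + m}

theorem mem_gV {F : Subfield E} {y : E} (hy : Tr F y) {x : E} : x ∈ gV F y ↔
    ∃ f g : E[X], (∀ i, f.coeff i ∈ F) ∧ (∀ i, g.coeff i ∈ F) ∧ g.coeff 0 ≠ 0 ∧
      x = f.eval y / g.eval y := by
  constructor
  · rintro ⟨a, ha, b, hb, hn, rfl⟩
    obtain ⟨f, hf, rfl⟩ := mem_ring.1 ha
    obtain ⟨g, hg, rfl⟩ := mem_ring.1 hb
    refine ⟨f, g, hf, hg, ?_, rfl⟩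
    intro h0
    apply hn
    refine ⟨g.divX.eval y, mem_ring.2 ⟨_, fun i => ?_, rfl⟩, ?_⟩
    · rw [coeff_divX]; exact hg _
    · conv_lhs => rw [← divX_mul_X_add g, h0]
      simp [mul_comm]
  · rintro ⟨f, g, hf, hg, h0, rfl⟩
    refine ⟨_, mem_ring.2 ⟨f, hf, rfl⟩, _, mem_ring.2 ⟨g, hg, rfl⟩, ?_, rfl⟩
    rintro ⟨b, hb, e⟩
    obtain ⟨u, hu, rfl⟩ := mem_ring.1 hb
    have h1 : g + -(X * u) ≠ 0 := by
      intro h2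
      apply h0
      have := congrArg (fun p => Polynomial.coeff p 0) h2
      simpa using this
    apply hy _ (coefs_add (S := F.toSubring) hg (coefs_neg (S := F.toSubring)
      (coefs_mul (S := F.toSubring) coefs_X hu))) h1
    simp [e]

theorem ne0_of_coeff {g : E[X]} (h : g.coeff 0 ≠ 0) : g ≠ 0 := by
  rintro rfl
  simp at h

section V
variable {k F : Subfield E} {y : E}

theorem y0 (hy : Tr F y) : y ≠ 0 := by
  simpa using hy X (coefs_X (S := F.toSubring)) X_ne_zero

theorem gV_sub (hy : Tr F y) {a b : E} (ha : a ∈ gV F y) (hb : b ∈ gV F y) : a - b ∈ gV F y := by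
  rw [mem_gV hy] at *
  obtain ⟨f, g, hf, hg, h0, rfl⟩ := ha
  obtain ⟨f', g', hf', hg', h0', rfl⟩ := hb
  refine ⟨f * g' + -(g * f'), g * g',
    coefs_add (S := F.toSubring) (coefs_mul (S := F.toSubring) hf hg')
      (coefs_neg (S := F.toSubring) (coefs_mul (S := F.toSubring) hg hf')),
    coefs_mul (S := F.toSubring) hg hg', ?_, ?_⟩
  · rw [mul_coeff_zero]; exact mul_ne_zero h0 h0'
  · rw [div_sub_div _ _ (hy g hg (ne0_of_coeff h0)) (hy g' hg' (ne0_of_coeff h0'))]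
    simp [sub_eq_add_neg]

theorem gV_mul (hy : Tr F y) {a b : E} (ha : a ∈ gV F y) (hb : b ∈ gV F y) : a * b ∈ gV F y := by
  rw [mem_gV hy] at *
  obtain ⟨f, g, hf, hg, h0, rfl⟩ := ha
  obtain ⟨f', g', hf', hg', h0', rfl⟩ := hb
  refine ⟨f * f', g * g', coefs_mul (S := F.toSubring) hf hf',
    coefs_mul (S := F.toSubring) hg hg', ?_, ?_⟩
  · rw [mul_coeff_zero]; exact mul_ne_zero h0 h0'
  · rw [div_mul_div_comm, eval_mul, eval_mul]

theorem gV_poly (hy : Tr F y) {f : E[X]} (hf : ∀ i, f.coeff i ∈ F) : f.eval y ∈ gV F y := by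
  rw [mem_gV hy]
  exact ⟨f, 1, hf, coefs_one (S := F.toSubring), by simp, by simp⟩

theorem gV_const (hy : Tr F y) {a : E} (ha : a ∈ F) : a ∈ gV F y := by
  simpa using gV_poly hy (coefs_C (S := F.toSubring) ha)

theorem gV_y (hy : Tr F y) : y ∈ gV F y := by
  simpa using gV_poly hy (coefs_X (S := F.toSubring))

theorem gM_sub (hy : Tr F y) {a b : E} (ha : a ∈ gM F y) (hb : b ∈ gM F y) : a - b ∈ gM F y := by
  obtain ⟨v, hv, rfl⟩ := ha
  obtain ⟨w, hw, rfl⟩ := hb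
  exact ⟨v - w, gV_sub hy hv hw, by ring⟩

theorem gM_mul (hy : Tr F y) {a b : E} (ha : a ∈ gM F y) (hb : b ∈ gV F y) : a * b ∈ gM F y := by
  obtain ⟨v, hv, rfl⟩ := ha
  exact ⟨v * b, gV_mul hy hv hb, by ring⟩

theorem gM_zero (hy : Tr F y) : (0 : E) ∈ gM F y := ⟨0, gV_const hy F.zero_mem, by simp⟩

theorem gM_neg (hy : Tr F y) {a : E} (ha : a ∈ gM F y) : -a ∈ gM F y := by
  simpa using gM_sub hy (gM_zero hy) ha

/-- one-units are invertible -/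
theorem gV_inv (hy : Tr F y) {c m : E} (hc : c ∈ F) (hc0 : c ≠ 0) (hm : m ∈ gM F y) :
    (c + m)⁻¹ ∈ gV F y ∧ c + m ≠ 0 := by
  obtain ⟨v, hv, rfl⟩ := hm
  rw [mem_gV hy] at *
  obtain ⟨f, g, hf, hg, h0, rfl⟩ := hv
  have hgy := hy g hg (ne0_of_coeff h0)
  have hu : ∀ i, (C c * g + X * f).coeff i ∈ F :=
    coefs_add (S := F.toSubring) (coefs_mul (S := F.toSubring) (coefs_C hc) hg)
      (coefs_mul (S := F.toSubring) coefs_X hf)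
  have hu0 : (C c * g + X * f).coeff 0 ≠ 0 := by
    simp [hc0, h0]
  have huy := hy _ hu (ne0_of_coeff hu0)
  have e : c + y * (f.eval y / g.eval y) = (C c * g + X * f).eval y / g.eval y := by
    simp
    field_simp
  rw [e]
  refine ⟨⟨g, _, hg, hu, hu0, ?_⟩, div_ne_zero huy hgy⟩
  rw [inv_div]

theorem gM_not_const (hy : Tr F y) {c : E} (hc : c ∈ F) (hc0 : c ≠ 0) : c ∉ gM F y := by
  intro h
  have := (gV_inv hy hc hc0 (gM_neg hy h)).2
  simp at this

theorem gM_gA (F : Subfield E) (k : Subfield E) (y : E) : gM F y ⊆ gA k F y :=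
  fun x hx => ⟨0, k.zero_mem, x, hx, by simp⟩

theorem gA_inv (hy : Tr F y) (hk : k ≤ F) {a : E} (ha : a ∈ gA k F y) (haM : a ∉ gM F y) :
    a⁻¹ ∈ gA k F y ∧ a⁻¹ ∈ gV F y ∧ a ≠ 0 := by
  obtain ⟨c, hc, m, hm, rfl⟩ := ha
  have hc0 : c ≠ 0 := by
    rintro rfl
    rw [zero_add] at haM
    exact haM hm
  obtain ⟨h1, h2⟩ := gV_inv hy (hk hc) hc0 hm
  refine ⟨⟨c⁻¹, k.inv_mem hc, (-m) * (c⁻¹ * (c + m)⁻¹), ?_, ?_⟩, h1, h2⟩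
  · exact gM_mul hy (gM_neg hy hm) (gV_mul hy (gV_const hy (F.inv_mem (hk hc))) h1)
  · field_simp
    ring

/-- archimedean property -/
theorem arch (hy : Tr F y) {x : E} (hx : x ∈ Subfield.closure ((F : Set E) ∪ {y})) :
    ∃ e : ℕ, ∀ N ≥ e, x * y ^ N ∈ gM F y := by
  obtain ⟨f, g, hf, hg, rfl⟩ := mem_field hx
  by_cases hg0 : g = 0
  · exact ⟨0, fun N _ => by simpa [hg0] using gM_zero hy⟩
  have key : ∀ (n : ℕ) (g : E[X]), g.natDegree ≤ n → (∀ i, g.coeff i ∈ F) → g ≠ 0 →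
      ∃ (e : ℕ) (u : E[X]), (∀ i, u.coeff i ∈ F) ∧ u.coeff 0 ≠ 0 ∧ g = X ^ e * u := by
    intro n
    induction n with
    | zero =>
      intro g hd hg hg0
      refine ⟨0, g, hg, ?_, by simp⟩
      intro h
      apply hg0
      rw [eq_C_of_natDegree_le_zero hd, h, C_0]
    | succ n ih =>
      intro g hd hg hg0
      by_cases h : g.coeff 0 = 0
      · have e1 : g = X * g.divX := by
          conv_lhs => rw [← divX_mul_X_add g, h]
          simp [mul_comm]
        have hne : g.divX ≠ 0 := by
          intro h1
          rw [h1, mul_zero] at e1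
          exact hg0 e1
        obtain ⟨e, u, hu, hu0, e2⟩ := ih g.divX (by rw [natDegree_divX_eq_natDegree_tsub_one]; omega)
          (fun i => by rw [coeff_divX]; exact hg _) hne
        refine ⟨e + 1, u, hu, hu0, ?_⟩
        rw [e1, e2]; ring
      · exact ⟨0, g, hg, h, by simp⟩
  obtain ⟨e, u, hu, hu0, rfl⟩ := key _ g le_rfl hg hg0
  have hy0 := y0 hy
  have huy := hy u hu (ne0_of_coeff hu0)
  refine ⟨e + 1, fun N hN => ?_⟩
  obtain ⟨d, rfl⟩ := Nat.exists_eq_add_of_le hN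
  refine ⟨f.eval y * y ^ d / u.eval y, ?_, ?_⟩
  · rw [mem_gV hy]
    refine ⟨f * X ^ d, u, coefs_mul (S := F.toSubring) hf (coefs_Xpow d), hu, hu0, by simp⟩
  · simp only [eval_mul, eval_pow, eval_X]
    field_simp
    ring

/-- the base case: localizations of `k + M` at nonmaximal primes -/
theorem base_val (hy : Tr F y) (hk : k ≤ F) {D : Subring E} (hD : (D : Set E) = gA k F y)
    {q : Ideal D} (hq : q.IsPrime)
    (hne : (Subtype.val '' (q : Set D) : Set E) ≠ gM F y ∩ gA k F y) {x : E}
    (hx : x ∈ Subfield.closure ((F : Set E) ∪ {y})) :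
    x ∈ gLoc (D : Set E) (Subtype.val '' (q : Set D)) := by
  have mem : ∀ x, x ∈ D ↔ x ∈ gA k F y := fun x => by rw [← hD]; rfl
  have hy0 := y0 hy
  have hyM : y ∈ gM F y := ⟨1, gV_const hy F.one_mem, by simp⟩
  have hyD : y ∈ D := (mem y).2 (gM_gA F k y hyM)
  -- y is not in q
  have hyq : (⟨y, hyD⟩ : D) ∉ q := by
    intro hyq
    apply hne
    apply Set.Subset.antisymm
    · rintro _ ⟨a, ha, rfl⟩
      refine ⟨?_, (mem _).1 a.2⟩
      by_contra haM
      obtain ⟨h1, h2, h3⟩ := gA_inv hy hk ((mem _).1 a.2) haM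
      have : (1 : D) ∈ q := by
        have := q.mul_mem_left ⟨_, (mem _).2 h1⟩ ha
        convert this using 1
        ext
        push_cast
        rw [inv_mul_cancel₀ h3]
      exact hq.ne_top ((Ideal.eq_top_iff_one _).2 this)
    · rintro m ⟨hmM, hmA⟩
      have hmD := (mem m).2 hmA
      rw [mem_val hmD]
      obtain ⟨v, hv, hmv⟩ := hmM
      have hs : y * (v * v) ∈ D := (mem _).2 (gM_gA F k y ⟨_, gV_mul hy hv hv, rfl⟩)
      have : (⟨m, hmD⟩ * ⟨m, hmD⟩ : D) ∈ q := by
        have := q.mul_mem_left ⟨_, hs⟩ hyq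
        convert this using 1
        ext
        push_cast
        rw [hmv]; ring
      exact (hq.mem_or_mem this).elim id id
  obtain ⟨e, he⟩ := arch hy hx
  have h1 := (mem _).2 (gM_gA F k y (he e le_rfl))
  refine ⟨_, h1, y ^ e, D.pow_mem hyD e, ?_, ?_⟩
  · rw [mem_val (D.pow_mem hyD e)]
    intro h
    exact hyq (hq.mem_of_pow_mem e h)
  · field_simp

theorem gV_mono {F' : Subfield E} (hF : F ≤ F') (hy : Tr F' y) : gV F y ⊆ gV F' y := by
  intro x hx
  rw [mem_gV (hy.mono hF)] at hx
  rw [mem_gV hy]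
  obtain ⟨f, g, hf, hg, h⟩ := hx
  exact ⟨f, g, fun i => hF (hf i), fun i => hF (hg i), h⟩

theorem gA_mono {k' F' : Subfield E} (hk : k ≤ k') (hF : F ≤ F') (hy : Tr F' y) :
    gA k F y ⊆ gA k' F' y := by
  rintro _ ⟨c, hc, _, ⟨v, hv, rfl⟩, rfl⟩
  exact ⟨c, hk hc, _, ⟨v, gV_mono hF hy hv, rfl⟩, rfl⟩

theorem gA_sub (hy : Tr F y) (hk : k ≤ F) :
    gA k F y ⊆ (Subfield.closure ((F : Set E) ∪ {y}) : Set E) := by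
  have hF : F ≤ Subfield.closure ((F : Set E) ∪ {y}) :=
    fun a ha => Subfield.subset_closure (Or.inl ha)
  have hyK : y ∈ Subfield.closure ((F : Set E) ∪ {y}) := Subfield.subset_closure (Or.inr rfl)
  rintro _ ⟨c, hc, _, ⟨v, hv, rfl⟩, rfl⟩
  rw [mem_gV hy] at hv
  obtain ⟨f, g, hf, hg, -, rfl⟩ := hv
  exact Subfield.add_mem _ (hF (hk hc)) (Subfield.mul_mem _ hyK
    (Subfield.div_mem _ (eval_mem hF hyK hf) (eval_mem hF hyK hg)))

/-- building a step -/
theorem mkStep {D : Set E} {L : Subfield E} {z : E} (hk : k ≤ F) (hy : Tr F y) (hz : z ∈ F)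
    (hL : L ≤ Subfield.closure ((F : Set E) ∪ {y})) (hT : Tr L ((1 + y * z) / y))
    (hDA : D ⊆ gA k F y) (hDL : D ⊆ L) : Step D L ((1 + y * z) / y) (gA k F y) (gM F y) := by
  have hF : F ≤ Subfield.closure ((F : Set E) ∪ {y}) :=
    fun a ha => Subfield.subset_closure (Or.inl ha)
  have hyK : y ∈ Subfield.closure ((F : Set E) ∪ {y}) := Subfield.subset_closure (Or.inr rfl)
  have hy0 := y0 hy
  have hyz : y * z ∈ gM F y := ⟨z, gV_const hy hz, rfl⟩
  obtain ⟨h1, h2⟩ := gV_inv hy F.one_mem one_ne_zero hyz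
  have hTK : (1 + y * z) / y ∈ Subfield.closure ((F : Set E) ∪ {y}) :=
    Subfield.div_mem _ (Subfield.add_mem _ (Subfield.one_mem _) (Subfield.mul_mem _ hyK (hF hz))) hyK
  have hpow : ∀ N : ℕ, ((1 + y * z)⁻¹) ^ N ∈ gV F y := by
    intro N
    induction N with
    | zero => simpa using gV_const hy F.one_mem
    | succ N ih => rw [pow_succ]; exact gV_mul hy ih h1
  have hp : 1 + y * z ∈ gV F y := by
    have h3 := gV_poly hy (f := 1 + X * C z) (coefs_add (S := F.toSubring) coefs_one
      (coefs_mul (S := F.toSubring) coefs_X (coefs_C hz)))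
    rwa [eval_add, eval_mul, eval_one, eval_X, eval_C] at h3
  refine ⟨hT, gM_gA F k y, ?_, ?_, ?_, fun a ha b hb => gM_sub hy ha hb,
    fun a ha haM => (gA_inv hy hk ha haM).1, hDA, hDL⟩
  · exact ⟨_, h1, by rw [inv_div, div_eq_mul_inv]⟩
  · intro f g hf hg
    obtain ⟨e, he⟩ := arch hy (Subfield.div_mem _ (eval_mem hL hTK hf) (eval_mem hL hTK hg))
    refine ⟨e, fun N hN => ?_⟩
    have := gM_mul hy (he N hN) (hpow N)
    convert this using 1
    rw [inv_div, div_pow, inv_pow]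
    ring
  · rintro _ ⟨v, hv, rfl⟩
    refine ⟨v * v * (1 + y * z), gV_mul hy (gV_mul hy hv hv) hp, ?_⟩
    field_simp

end V
end generic2
end TowerAux

namespace TowerAux
open Polynomial
section concrete
variable (k0 : Type) [Field k0] (r : ℕ)

/-- the variables in the ambient field -/
noncomputable def vr (i : TowerVars r) : Amb k0 r :=
  algebraMap (MvPolynomial (TowerVars r) k0) (Amb k0 r) (MvPolynomial.X i)

theorem vr_indep : AlgebraicIndependent k0 (vr k0 r) := by
  have h := MvPolynomial.algebraicIndependent_X (TowerVars r) k0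
  exact h.map' (f := IsScalarTower.toAlgHom k0 (MvPolynomial (TowerVars r) k0) (Amb k0 r))
    (IsFractionRing.injective (MvPolynomial (TowerVars r) k0) (Amb k0 r))

/-- all variables but one -/
noncomputable def co (i : TowerVars r) : Subfield (Amb k0 r) :=
  (IntermediateField.adjoin k0 (vr k0 r '' {i}ᶜ)).toSubfield

theorem vr_tr (i : TowerVars r) : Tr (co k0 r i) (vr k0 r i) := by
  apply tr_of_transcendental
  have h := (vr_indep k0 r).transcendental_adjoin (i := i) (s := {i}ᶜ) (by simp)
  intro h2
  exact h (IntermediateField.isAlgebraic_adjoin_iff.1 h2)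

theorem vr_co {i j : TowerVars r} (h : j ≠ i) : vr k0 r j ∈ co k0 r i :=
  IntermediateField.subset_adjoin k0 _ ⟨j, h, rfl⟩

theorem base_co (i : TowerVars r) : baseSet k0 r ⊆ co k0 r i := by
  rintro _ ⟨c, rfl⟩
  exact (IntermediateField.adjoin k0 (vr k0 r '' {i}ᶜ)).algebraMap_mem c

theorem k_co {n : ℕ} {i : TowerVars r} (h : ∀ j, j ≤ n → Sum.inl j ≠ i) :
    kfld k0 r n ≤ co k0 r i := by
  rw [kfld, Subfield.closure_le, Set.union_subset_iff]
  refine ⟨base_co k0 r i, ?_⟩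
  rintro _ ⟨j, -, hj, rfl⟩
  exact vr_co k0 r (h j hj)

theorem F_co {n : ℕ} {i : TowerVars r} (h : ∀ j, j ≤ n → Sum.inl j ≠ i)
    (h' : ∀ j, Sum.inr (Sum.inr j) ≠ i) : Ffld k0 r n ≤ co k0 r i := by
  rw [Ffld, Subfield.closure_le, Set.union_subset_iff]
  refine ⟨k_co k0 r h, ?_⟩
  rintro _ ⟨j, rfl⟩
  exact vr_co k0 r (h' j)

theorem trY (n : ℕ) : Tr (Ffld k0 r n) (ambY k0 r) :=
  (vr_tr k0 r (Sum.inr (Sum.inl ()))).mono (F_co k0 r (by simp) (by simp))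

theorem Y0 : ambY k0 r ≠ 0 := y0 (trY k0 r 0)

theorem Y_mem (n : ℕ) : ambY k0 r ∈ Kfld k0 r n := Subfield.subset_closure (Or.inr rfl)

theorem trX (n : ℕ) : Tr (Kfld k0 r n) (ambX k0 r (n + 1)) := by
  refine (vr_tr k0 r (Sum.inl (n + 1))).mono ?_
  rw [Kfld, Subfield.closure_le, Set.union_subset_iff]
  refine ⟨F_co k0 r (fun j hj h => ?_) (by simp), ?_⟩
  · have := Sum.inl_injective h
    omega
  · rintro _ rfl
    exact vr_co k0 r (by simp)

theorem X'_eq (n : ℕ) : ambX' k0 r n = ambX k0 r n + (ambY k0 r)⁻¹ := by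
  have := Y0 k0 r
  rw [ambX']
  field_simp
  ring

theorem trX' (n : ℕ) : Tr (Kfld k0 r n) (ambX' k0 r (n + 1)) := by
  rw [X'_eq]
  exact (trX k0 r n).add (Subfield.inv_mem _ (Y_mem k0 r n))

theorem k_mono (n : ℕ) : kfld k0 r n ≤ kfld k0 r (n + 1) := by
  apply Subfield.closure_mono
  apply Set.union_subset_union_right
  rintro _ ⟨i, h1, h2, h3⟩
  exact ⟨i, h1, by omega, h3⟩

theorem k_F (n : ℕ) : kfld k0 r n ≤ Ffld k0 r n := fun _ h => Subfield.subset_closure (Or.inl h)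
theorem F_K (n : ℕ) : Ffld k0 r n ≤ Kfld k0 r n := fun _ h => Subfield.subset_closure (Or.inl h)

theorem F_mono (n : ℕ) : Ffld k0 r n ≤ Ffld k0 r (n + 1) :=
  Subfield.closure_mono (Set.union_subset_union_left _ (k_mono k0 r n))

theorem K_mono (n : ℕ) : Kfld k0 r n ≤ Kfld k0 r (n + 1) :=
  Subfield.closure_mono (Set.union_subset_union_left _ (F_mono k0 r n))

theorem X_mem (n : ℕ) : ambX k0 r (n + 1) ∈ kfld k0 r (n + 1) :=
  Subfield.subset_closure (Or.inr ⟨n + 1, by omega, le_rfl, rfl⟩)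

theorem K_gen (n : ℕ) :
    Kfld k0 r (n + 1) ≤ Subfield.closure ((Kfld k0 r n : Set (Amb k0 r)) ∪ {ambX' k0 r (n + 1)}) := by
  set S := Subfield.closure ((Kfld k0 r n : Set (Amb k0 r)) ∪ {ambX' k0 r (n + 1)}) with hS
  have hK : Kfld k0 r n ≤ S := fun _ h => Subfield.subset_closure (Or.inl h)
  have hT : ambX' k0 r (n + 1) ∈ S := Subfield.subset_closure (Or.inr rfl)
  have hY : ambY k0 r ∈ S := hK (Y_mem k0 r n)
  have hX : ambX k0 r (n + 1) ∈ S := by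
    have := S.sub_mem hT (S.inv_mem hY)
    rwa [X'_eq, add_sub_cancel_right] at this
  rw [Kfld, Subfield.closure_le, Set.union_subset_iff]
  refine ⟨?_, by rintro _ rfl; exact hY⟩
  change Ffld k0 r (n + 1) ≤ S
  rw [Ffld, Subfield.closure_le, Set.union_subset_iff]
  constructor
  · change kfld k0 r (n + 1) ≤ S
    rw [kfld, Subfield.closure_le, Set.union_subset_iff]
    constructor
    · intro x hx
      exact hK (F_K k0 r n (k_F k0 r n (Subfield.subset_closure (Or.inl hx))))
    · rintro _ ⟨i, h1, h2, rfl⟩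
      rcases Nat.lt_or_ge n i with h | h
      · obtain rfl : i = n + 1 := by omega
        exact hX
      · exact hK (F_K k0 r n (k_F k0 r n (Subfield.subset_closure (Or.inr ⟨i, h1, h, rfl⟩))))
  · intro x hx
    exact hK (F_K k0 r n (Subfield.subset_closure (Or.inr hx)))

theorem A_eq (n : ℕ) : Aset k0 r n = gA (kfld k0 r n) (Ffld k0 r n) (ambY k0 r) := rfl
theorem M_eq (n : ℕ) : Mset k0 r n = gM (Ffld k0 r n) (ambY k0 r) := rfl

theorem D_A (n : ℕ) : Dset k0 r (n + 1) ⊆ Aset k0 r (n + 1) := by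
  cases n with
  | zero => exact fun x h => h
  | succ n => exact fun x h => h.2

theorem step (n : ℕ) : Step (Dset k0 r (n + 1)) (Kfld k0 r (n + 1)) (ambX' k0 r (n + 2))
    (Aset k0 r (n + 2)) (Mset k0 r (n + 2)) := by
  refine mkStep (k_F k0 r _) (trY k0 r _) (k_F k0 r _ (X_mem k0 r (n + 1))) (K_mono k0 r (n + 1))
    (trX' k0 r (n + 1)) ?_ ?_
  · exact (D_A k0 r n).trans (gA_mono (k_mono k0 r _) (F_mono k0 r _) (trY k0 r _))
  · exact (D_A k0 r n).trans (gA_sub (trY k0 r _) (k_F k0 r _))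

theorem D_eq (n : ℕ) : Dset k0 r (n + 2) = gKr (Dset k0 r (n + 1)) (Kfld k0 r (n + 1))
    (ambX' k0 r (n + 2)) ∩ Aset k0 r (n + 2) := by
  rw [Dset]; rfl

theorem MM_eq (n : ℕ) : MMset k0 r (n + 2) = Mset k0 r (n + 2) ∩ (gKr (Dset k0 r (n + 1))
    (Kfld k0 r (n + 1)) (ambX' k0 r (n + 2)) ∩ Aset k0 r (n + 2)) := by
  rw [MMset, D_eq]

theorem hval (n : ℕ) {D : Subring (Amb k0 r)} (hD : (D : Set (Amb k0 r)) = Dset k0 r (n + 1))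
    {q : Ideal D} (hq : q.IsPrime)
    (hne : (Subtype.val '' (q : Set D) : Set (Amb k0 r)) ≠ MMset k0 r (n + 1))
    (x : Amb k0 r) (hx : x ∈ Kfld k0 r (n + 1)) :
    x ∈ gLoc (D : Set (Amb k0 r)) (Subtype.val '' (q : Set D)) ∨
      x⁻¹ ∈ gLoc (D : Set (Amb k0 r)) (Subtype.val '' (q : Set D)) := by
  cases n with
  | zero => exact Or.inl (base_val (trY k0 r 1) (k_F k0 r 1) hD hq hne hx)
  | succ n =>
    rw [D_eq] at hD
    rw [MM_eq] at hne
    obtain ⟨f, g, hf, hg, rfl⟩ := mem_field (K_gen k0 r (n + 1) hx)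
    exact (step k0 r n).val_of_prime hD hq (fun ht => hne ((step k0 r n).eq_MM hD hq ht)) hf hg

end concrete
end TowerAux

/-- In the tower construction, for every `n ≥ 2` and every prime ideal
`q′` of `D_{n-1}` with `q′ ≠ 𝓜_{n-1}`, there is a unique prime ideal `q ≠ 𝓜ₙ` of
`Dₙ` with `q ∩ D_{n-1} = q′`, and moreover `(Dₙ)_q = (D_{n-1})_{q′}(X′ₙ)`, the Nagata
ring of `(D_{n-1})_{q′}` in the variable `X′ₙ`. -/
theorem tower_unique_prime_over_previous_level
    (k0 : Type) [Field k0] (r : ℕ) (hr : 2 ≤ r) (n : ℕ) (hn : 2 ≤ n) :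
    ∀ D' Dp : Subring (Amb k0 r),
      (D' : Set (Amb k0 r)) = Dset k0 r n → (Dp : Set (Amb k0 r)) = Dset k0 r (n - 1) →
      ∀ q' : Ideal ↥Dp, q'.IsPrime →
        Subtype.val '' (q' : Set ↥Dp) ≠ MMset k0 r (n - 1) →
        ∃ q : Ideal ↥D', q.IsPrime ∧
          Subtype.val '' (q : Set ↥D') ≠ MMset k0 r n ∧
          Subtype.val '' (q : Set ↥D') ∩ Dset k0 r (n - 1) = Subtype.val '' (q' : Set ↥Dp) ∧
          (∀ q₂ : Ideal ↥D', q₂.IsPrime →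
            Subtype.val '' (q₂ : Set ↥D') ≠ MMset k0 r n →
            Subtype.val '' (q₂ : Set ↥D') ∩ Dset k0 r (n - 1) =
              Subtype.val '' (q' : Set ↥Dp) →
            q₂ = q) ∧
          locAt k0 r (Dset k0 r n) (Subtype.val '' (q : Set ↥D')) =
            nagataSet k0 r
              (locAt k0 r (Dset k0 r (n - 1)) (Subtype.val '' (q' : Set ↥Dp)))
              (ambX' k0 r n) := by
  obtain ⟨m, rfl⟩ := Nat.exists_eq_add_of_le' hn
  intro D' Dp hD' hDp q' hq' hne
  change (Dp : Set (Amb k0 r)) = Dset k0 r (m + 1) at hDp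
  change Subtype.val '' (q' : Set ↥Dp) ≠ MMset k0 r (m + 1) at hne
  have hv := TowerAux.hval k0 r m hDp hq' hne
  have hs := TowerAux.step k0 r m
  have hD2 := hD'.trans (TowerAux.D_eq k0 r m)
  have hM := TowerAux.MM_eq k0 r m
  rw [← hDp] at hs hD2 hM
  rw [hM, ← hD']
  change ∃ q : Ideal ↥D', q.IsPrime ∧ _ ∧ Subtype.val '' (q : Set ↥D') ∩ Dset k0 r (m + 1) = _ ∧
    (∀ q₂ : Ideal ↥D', q₂.IsPrime → _ →
      Subtype.val '' (q₂ : Set ↥D') ∩ Dset k0 r (m + 1) = _ → q₂ = q) ∧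
    _ = nagataSet k0 r (locAt k0 r (Dset k0 r (m + 1)) _) _
  rw [← hDp]
  exact hs.main hD2 hq' hv
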